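/- arXiv:2508.12468 — 3 statements merged into one kernel-verified Lean document; each statement's English description precedes it below -/
import Mathlib

section
/- For every complex number q with 0 < |q| < 1 and every nonzero complex number u, one has ∑_{i,j,k,l ≥ 0} u^{i−j−k} q^{2i²+2j²+2k²+2l²−2ij−2ik−2il+2jk+2jl} / ((q²;q²)_i (q²;q²)_j (q²;q²)_k (q²;q²)_l) = (1/J_2²) · ( (−q²u, −q²/u, q⁴; q⁴)_∞ · (−q⁶u, −q⁶/u, q¹²; q¹²)_∞ + q² · (−u, −q⁴/u, q⁴; q⁴)_∞ · (−q¹²u, −1/u, q¹²; q¹²)_∞ ). -/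
open scoped BigOperators

/-- The infinite q-Pochhammer symbol `(a; q)_∞ = ∏_{k=0}^∞ (1 - a q^k)`. -/
noncomputable def qPochInf (a q : ℂ) : ℂ := ∏' n : ℕ, (1 - a * q ^ n)

/-- The finite q-Pochhammer symbol `(a; q)_n = ∏_{k=0}^{n-1} (1 - a q^k)`. -/
noncomputable def qPoch (a q : ℂ) (n : ℕ) : ℂ :=
  Finset.prod (Finset.range n) (fun k => 1 - a * q ^ k)

/-- `J_m = (q^m; q^m)_∞`. -/
noncomputable def J (q : ℂ) (m : ℕ) : ℂ := qPochInf (q ^ m) (q ^ m)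

/-- `J_{a,m} = (q^a; q^m)_∞ (q^{m-a}; q^m)_∞ (q^m; q^m)_∞`. -/
noncomputable def Jam (q : ℂ) (a m : ℕ) : ℂ :=
  qPochInf (q ^ a) (q ^ m) * qPochInf (q ^ (m - a)) (q ^ m) * qPochInf (q ^ m) (q ^ m)

open Filter Topology

lemma gauss_summable (V ρ : ℝ) (hV : 0 < V) (h0 : 0 < ρ) (h1 : ρ < 1) :
    Summable (fun n : ℕ => V ^ n * ρ ^ (n ^ 2)) := by
  refine summable_of_ratio_test_tendsto_lt_one (l := 0) one_pos (Eventually.of_forall fun n => by positivity) ?_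
  have h : ∀ n : ℕ, ‖V ^ (n+1) * ρ ^ ((n+1) ^ 2)‖ / ‖V ^ n * ρ ^ (n ^ 2)‖ = V * ρ * (ρ ^ 2) ^ n := by
    intro n
    rw [Real.norm_of_nonneg (by positivity), Real.norm_of_nonneg (by positivity), div_eq_iff (by positivity)]
    ring
  simp_rw [h]
  have := (tendsto_pow_atTop_nhds_zero_of_lt_one (r := ρ^2) (by positivity) (by nlinarith)).const_mul (V * ρ)
  simpa using this

/-- Gaussian bound on the integers. -/
noncomputable def gB (V ρ : ℝ) (n : ℤ) : ℝ := V ^ n.natAbs * ρ ^ (n.natAbs ^ 2)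

lemma gB_summable (V ρ : ℝ) (hV : 0 < V) (h0 : 0 < ρ) (h1 : ρ < 1) : Summable (gB V ρ) := by
  apply Summable.of_nat_of_neg
  · simpa [gB] using gauss_summable V ρ hV h0 h1
  · simpa [gB] using gauss_summable V ρ hV h0 h1

lemma qp_summable (a x : ℂ) (h1 : ‖x‖ < 1) : Summable (fun n : ℕ => ‖-(a * x ^ n)‖) := by
  simp only [norm_neg, norm_mul, norm_pow]
  exact (summable_geometric_of_lt_one (norm_nonneg _) h1).mul_left _

lemma qp_tendsto (a x : ℂ) (h1 : ‖x‖ < 1) :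
    Tendsto (fun n => qPoch a x n) atTop (𝓝 (qPochInf a x)) := by
  have := (multipliable_one_add_of_summable (qp_summable a x h1)).tendsto_prod_tprod_nat
  simpa [qPoch, qPochInf, sub_eq_add_neg] using this

lemma one_sub_pow_ne (x : ℂ) (h1 : ‖x‖ < 1) (n : ℕ) : 1 - x ^ (n+1) ≠ 0 := by
  intro h
  have h2 : x ^ (n+1) = 1 := (sub_eq_zero.mp h).symm
  have h3 : ‖x‖ ^ (n+1) = 1 := by rw [← norm_pow, h2, norm_one]
  have h4 : ‖x‖ ^ (n+1) < 1 := pow_lt_one₀ (norm_nonneg _) h1 (by omega)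
  linarith

lemma qpInf_ne (x : ℂ) (h1 : ‖x‖ < 1) : qPochInf x x ≠ 0 := by
  have := tprod_one_add_ne_zero_of_summable (f := fun n : ℕ => -(x * x ^ n)) (fun n => by
    have := one_sub_pow_ne x h1 n
    rw [pow_succ'] at this
    rwa [← sub_eq_add_neg]) (qp_summable x x h1)
  simpa [qPochInf, sub_eq_add_neg] using this

lemma qp_ne (x : ℂ) (h1 : ‖x‖ < 1) (n : ℕ) : qPoch x x n ≠ 0 := by
  rw [qPoch, Finset.prod_ne_zero_iff]
  intro k _
  have := one_sub_pow_ne x h1 k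
  rwa [pow_succ'] at this

/-- `1/(x;x)_n` extended by zero to negative integers. -/
noncomputable def eI (x : ℂ) : ℤ → ℂ
  | Int.ofNat n => (qPoch x x n)⁻¹
  | Int.negSucc _ => 0

lemma eI_nat (x : ℂ) (n : ℕ) : eI x (n : ℤ) = (qPoch x x n)⁻¹ := rfl

lemma eI_neg (x : ℂ) (n : ℤ) (h : n < 0) : eI x n = 0 := by
  obtain ⟨m, rfl⟩ := Int.eq_negSucc_of_lt_zero h
  rfl

lemma eI_rec (x : ℂ) (h1 : ‖x‖ < 1) (n : ℤ) : (1 - x ^ n) * eI x n = eI x (n - 1) := by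
  rcases lt_trichotomy n 0 with h | h | h
  · rw [eI_neg x n h, eI_neg x (n-1) (by omega), mul_zero]
  · subst h; rw [eI_neg x (0-1) (by norm_num)]; simp
  · obtain ⟨m, rfl⟩ : ∃ m : ℕ, n = m + 1 := ⟨(n-1).toNat, by omega⟩
    have e : ((m:ℤ) + 1) = ((m+1 : ℕ) : ℤ) := by push_cast; ring
    rw [add_sub_cancel_right, e, eI_nat, eI_nat, zpow_natCast, qPoch, Finset.prod_range_succ, ← qPoch,
      mul_inv, ← pow_succ']
    field_simp [one_sub_pow_ne x h1 m, qp_ne x h1 m]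

lemma eI_tendsto (x : ℂ) (h1 : ‖x‖ < 1) :
    Tendsto (fun n : ℕ => eI x n) atTop (𝓝 (qPochInf x x)⁻¹) :=
  (qp_tendsto x x h1).inv₀ (qpInf_ne x h1)

lemma eI_bound (x : ℂ) (h1 : ‖x‖ < 1) : ∃ C : ℝ, 0 < C ∧ ∀ n : ℤ, ‖eI x n‖ ≤ C := by
  obtain ⟨C, hC⟩ := (eI_tendsto x h1).norm.bddAbove_range
  refine ⟨max C 1, by positivity, fun n => ?_⟩
  rcases lt_or_ge n 0 with h | h
  · rw [eI_neg x n h, norm_zero]; positivity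
  · lift n to ℕ using h
    exact (hC ⟨n, rfl⟩).trans (le_max_left _ _)

/-- Summand of the Durfee identity. -/
noncomputable def dT (x : ℂ) (n j : ℤ) : ℂ := x ^ (j * (j + n)) * eI x j * eI x (j + n)

lemma dT_bound (x : ℂ) (h0 : 0 < ‖x‖) (h1 : ‖x‖ < 1) (C : ℝ) (hC0 : 0 < C)
    (hC : ∀ n : ℤ, ‖eI x n‖ ≤ C) (n : ℕ) (j : ℤ) :
    ‖dT x n j‖ ≤ C ^ 2 * gB 1 ‖x‖ j := by
  rcases lt_or_ge j 0 with h | h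
  · rw [dT, eI_neg x j h]
    simp only [mul_zero, zero_mul, norm_zero, gB]
    positivity
  · lift j to ℕ using h
    rw [dT, norm_mul, norm_mul, norm_zpow, gB]
    have e : ‖x‖ ^ ((j:ℤ) * (j + n)) ≤ ‖x‖ ^ (j ^ 2) := by
      have : ((j:ℤ) * (j + n)) = ((j * (j + n) : ℕ) : ℤ) := by push_cast; ring
      rw [this, zpow_natCast]
      exact pow_le_pow_of_le_one h0.le h1.le (by nlinarith)
    simp only [Int.natAbs_natCast, one_pow, one_mul]
    calc ‖x‖ ^ ((j:ℤ) * (j + n)) * ‖eI x j‖ * ‖eI x (j + n)‖ ≤ ‖x‖ ^ (j ^ 2) * C * C := by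
          gcongr
          · exact hC _
          · exact hC _
      _ = _ := by ring

lemma dT_summable_nat (x : ℂ) (h0 : 0 < ‖x‖) (h1 : ‖x‖ < 1) (n : ℕ) : Summable (dT x n) := by
  obtain ⟨C, hC0, hC⟩ := eI_bound x h1
  exact Summable.of_norm_bounded ((gB_summable 1 ‖x‖ one_pos h0 h1).mul_left _)
    (dT_bound x h0 h1 C hC0 hC n)

lemma durfee_tendsto (x : ℂ) (h0 : 0 < ‖x‖) (h1 : ‖x‖ < 1) :
    Tendsto (fun n : ℕ => ∑' j, dT x n j) atTop (𝓝 (qPochInf x x)⁻¹) := by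
  obtain ⟨C, hC0, hC⟩ := eI_bound x h1
  have hx : x ≠ 0 := norm_pos_iff.mp h0
  have key := tendsto_tsum_of_dominated_convergence (𝓕 := atTop) (f := fun (n : ℕ) (j : ℤ) => dT x n j)
    (g := fun j : ℤ => if j = 0 then (qPochInf x x)⁻¹ else 0)
    ((gB_summable 1 ‖x‖ one_pos h0 h1).mul_left (C ^ 2)) ?_
    (Eventually.of_forall fun n j => dT_bound x h0 h1 C hC0 hC n j)
  · simpa using key
  · intro j
    rcases lt_trichotomy j 0 with h | h | h
    · simp only [dT, eI_neg x j h, mul_zero, zero_mul, h.ne, if_false]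
      exact tendsto_const_nhds
    · subst h
      have : eI x 0 = 1 := by simpa [qPoch] using eI_nat x 0
      simpa [dT, this] using eI_tendsto x h1
    · simp only [h.ne', if_false]
      lift j to ℕ using h.le
      have hj : 0 < j := by exact_mod_cast h
      refine squeeze_zero_norm (a := fun n => C ^ 2 * ‖x‖ ^ n) (fun n => ?_) ?_
      · rw [dT, norm_mul, norm_mul, norm_zpow]
        have e : ‖x‖ ^ ((j:ℤ) * (j + n)) ≤ ‖x‖ ^ n := by
          have : ((j:ℤ) * (j + n)) = ((j * (j + n) : ℕ) : ℤ) := by push_cast; ring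
          rw [this, zpow_natCast]
          exact pow_le_pow_of_le_one h0.le h1.le (by nlinarith)
        calc ‖x‖ ^ ((j:ℤ) * (j + n)) * ‖eI x j‖ * ‖eI x (j + n)‖ ≤ ‖x‖ ^ n * C * C := by
              gcongr
              · exact hC _
              · exact hC _
          _ = _ := by ring
      · simpa using (tendsto_pow_atTop_nhds_zero_of_lt_one h0.le h1).const_mul (C ^ 2)

lemma durfee_rec (x : ℂ) (h0 : 0 < ‖x‖) (h1 : ‖x‖ < 1) (n : ℕ) :
    (∑' j, dT x n j) - (∑' j, dT x (n+1 : ℕ) j) =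
      -x ^ (n + 1) * ((∑' j, dT x (n+1 : ℕ) j) - (∑' j, dT x (n+2 : ℕ) j)) := by
  have hx : x ≠ 0 := norm_pos_iff.mp h0
  have s0 := dT_summable_nat x h0 h1 n
  have s1 := dT_summable_nat x h0 h1 (n+1)
  have e1 : ∀ j, dT x n j - dT x (n+1 : ℕ) j + x ^ (n+1) * dT x (n+1 : ℕ) j
      = x ^ (j * (j + n)) * eI x (j - 1) * eI x (j + n + 1) := by
    intro j
    have a1 := eI_rec x h1 (j + n + 1)
    rw [add_sub_cancel_right] at a1
    rw [dT, dT, ← eI_rec x h1 j, ← a1]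
    have a2 : x ^ (j * (j + (n+1 : ℕ))) = x ^ (j * (j + n)) * x ^ j := by
      rw [← zpow_add₀ hx]; congr 1; push_cast; ring
    have a3 : x ^ (j + n + 1) = x ^ j * x ^ (n + 1) := by
      rw [← zpow_natCast x (n+1), ← zpow_add₀ hx]; congr 1; push_cast; ring
    have a4 : j + ((n+1 : ℕ) : ℤ) = j + n + 1 := by push_cast; ring
    rw [a2, a3, a4]
    ring
  have e2 : ∑' j : ℤ, x ^ (j * (j + n)) * eI x (j - 1) * eI x (j + n + 1)
      = x ^ (n+1) * ∑' j, dT x (n+2 : ℕ) j := by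
    rw [← (Equiv.addRight (1:ℤ)).tsum_eq, ← tsum_mul_left]
    refine tsum_congr fun j => ?_
    simp only [Equiv.coe_addRight, add_sub_cancel_right, dT]
    have a4 : j + ((n+2 : ℕ) : ℤ) = j + 1 + n + 1 := by push_cast; ring
    have a2 : x ^ ((j + 1) * (j + 1 + n)) = x ^ (n + 1) * x ^ (j * (j + 1 + n + 1)) := by
      rw [← zpow_natCast x (n+1), ← zpow_add₀ hx]; congr 1; push_cast; ring
    rw [a4, a2]
    ring
  have e3 := tsum_congr (L := SummationFilter.unconditional ℤ) e1
  rw [e2, (s0.sub s1).tsum_add (s1.mul_left _), s0.tsum_sub s1, tsum_mul_left] at e3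
  linear_combination e3

lemma durfee_nat (x : ℂ) (h0 : 0 < ‖x‖) (h1 : ‖x‖ < 1) (n : ℕ) :
    ∑' j, dT x n j = (qPochInf x x)⁻¹ := by
  set F : ℕ → ℂ := fun n => ∑' j, dT x n j with hF
  have ht : Tendsto F atTop (𝓝 (qPochInf x x)⁻¹) := durfee_tendsto x h0 h1
  have hD : ∀ n m, ‖F n - F (n+1)‖ ≤ ‖F (m + n) - F (m + n + 1)‖ := by
    intro n m
    induction m with
    | zero => simp
    | succ m ih =>
      refine ih.trans ?_
      have := durfee_rec x h0 h1 (m + n)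
      change F (m+n) - F (m+n+1) = _ * (F (m+n+1) - F (m+n+2)) at this
      rw [this, norm_mul, norm_neg, norm_pow]
      have e : m + 1 + n = m + n + 1 := by ring
      rw [e]
      exact mul_le_of_le_one_left (norm_nonneg _) (pow_le_one₀ h0.le h1.le)
  have hz : ∀ n, F n = F (n+1) := by
    intro n
    have l : Tendsto (fun m => ‖F (m+n) - F (m+n+1)‖) atTop (𝓝 0) := by
      have t1 := ht.comp (tendsto_add_atTop_nat n)
      have t2 := ht.comp (tendsto_add_atTop_nat (n+1))
      simpa [Function.comp_def, add_assoc] using (t1.sub t2).norm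
    have := ge_of_tendsto' l (hD n)
    exact sub_eq_zero.mp (norm_le_zero_iff.mp this)
  have hc : ∀ m, F (m + n) = F n := by
    intro m
    induction m with
    | zero => simp
    | succ m ih => rw [← ih, hz (m+n)]; congr 1; ring
  have t1 := ht.comp (tendsto_add_atTop_nat n)
  simp only [Function.comp_def, hc] at t1
  exact tendsto_nhds_unique tendsto_const_nhds t1

lemma dT_symm (x : ℂ) (n j : ℤ) : dT x n (j - n) = dT x (-n) j := by
  simp only [dT, sub_add_cancel, ← sub_eq_add_neg]
  rw [mul_comm (j - n) j]; ring

lemma durfee (x : ℂ) (h0 : 0 < ‖x‖) (h1 : ‖x‖ < 1) (n : ℤ) :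
    ∑' j, dT x n j = (qPochInf x x)⁻¹ := by
  rcases Int.eq_nat_or_neg n with ⟨m, rfl | rfl⟩
  · exact durfee_nat x h0 h1 m
  · rw [← durfee_nat x h0 h1 m, ← (Equiv.subRight (m:ℤ)).tsum_eq (dT x m)]
    exact tsum_congr fun j => (dT_symm x m j).symm

/-- Summand of Euler's identity. -/
noncomputable def eT (w z : ℂ) (n : ℤ) : ℂ := z ^ n * w ^ (n * (n - 1)) * eI (w ^ 2) n

lemma eT_bound (w : ℂ) (h0 : 0 < ‖w‖) (C : ℝ) (hC0 : 0 < C)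
    (hC : ∀ n : ℤ, ‖eI (w ^ 2) n‖ ≤ C) (R : ℝ) (hR : 0 < R) (z : ℂ) (hz : ‖z‖ ≤ R) (n : ℤ) :
    ‖eT w z n‖ ≤ C * gB (R / ‖w‖) ‖w‖ n := by
  rcases lt_or_ge n 0 with h | h
  · rw [eT, eI_neg _ n h]
    simp only [mul_zero, norm_zero, gB]
    positivity
  · lift n to ℕ using h
    rw [eT, norm_mul, norm_mul, norm_zpow, norm_zpow, gB, zpow_natCast]
    have e : ‖w‖ ^ ((n:ℤ) * (n - 1)) = ‖w‖ ^ (n ^ 2) / ‖w‖ ^ n := by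
      rw [← zpow_natCast, ← zpow_natCast, ← zpow_sub₀ h0.ne']
      congr 1; push_cast; ring
    rw [e]
    simp only [Int.natAbs_natCast]
    calc ‖z‖ ^ n * (‖w‖ ^ (n ^ 2) / ‖w‖ ^ n) * ‖eI (w ^ 2) n‖
        ≤ R ^ n * (‖w‖ ^ (n ^ 2) / ‖w‖ ^ n) * C := by
          gcongr
          exact hC _
      _ = _ := by rw [div_pow]; ring

lemma sq_norm_lt (w : ℂ) (h1 : ‖w‖ < 1) : ‖w ^ 2‖ < 1 := by
  rw [norm_pow]; exact pow_lt_one₀ (norm_nonneg _) h1 (by norm_num)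

lemma eT_summable (w z : ℂ) (h0 : 0 < ‖w‖) (h1 : ‖w‖ < 1) (hz : z ≠ 0) : Summable (eT w z) := by
  obtain ⟨C, hC0, hC⟩ := eI_bound (w ^ 2) (sq_norm_lt w h1)
  have := norm_pos_iff.mpr hz
  exact Summable.of_norm_bounded ((gB_summable (‖z‖ / ‖w‖) ‖w‖ (by positivity) h0 h1).mul_left _)
    (eT_bound w h0 C hC0 hC ‖z‖ this z le_rfl)

lemma euler_rec (w z : ℂ) (h0 : 0 < ‖w‖) (h1 : ‖w‖ < 1) (hz : z ≠ 0) :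
    ∑' n, eT w z n = (1 + z) * ∑' n, eT w (z * w ^ 2) n := by
  have hw : w ≠ 0 := norm_pos_iff.mp h0
  have hz' : z * w ^ 2 ≠ 0 := by positivity
  have s0 := eT_summable w z h0 h1 hz
  have s1 := eT_summable w (z * w ^ 2) h0 h1 hz'
  have e1 : ∀ n, eT w z n - eT w (z * w ^ 2) n = z ^ n * w ^ (n * (n - 1)) * eI (w ^ 2) (n - 1) := by
    intro n
    rw [← eI_rec _ (sq_norm_lt w h1), eT, eT, mul_zpow]
    ring
  have e2 : ∑' n : ℤ, z ^ n * w ^ (n * (n - 1)) * eI (w ^ 2) (n - 1)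
      = z * ∑' n, eT w (z * w ^ 2) n := by
    rw [← (Equiv.addRight (1:ℤ)).tsum_eq, ← tsum_mul_left]
    refine tsum_congr fun n => ?_
    simp only [Equiv.coe_addRight, add_sub_cancel_right, eT]
    have a : w ^ ((n + 1) * n) = (w ^ 2) ^ n * w ^ (n * (n - 1)) := by
      rw [← zpow_natCast w 2, ← zpow_mul, ← zpow_add₀ hw]; congr 1; push_cast; ring
    rw [a, zpow_add_one₀ hz, mul_zpow]
    ring
  have e3 := tsum_congr (L := SummationFilter.unconditional ℤ) e1
  rw [e2, s0.tsum_sub s1] at e3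
  linear_combination e3

lemma euler (w z : ℂ) (h0 : 0 < ‖w‖) (h1 : ‖w‖ < 1) (hz : z ≠ 0) :
    ∑' n, eT w z n = qPochInf (-z) (w ^ 2) := by
  have hw : w ≠ 0 := norm_pos_iff.mp h0
  have hy := sq_norm_lt w h1
  obtain ⟨C, hC0, hC⟩ := eI_bound (w ^ 2) hy
  have hzp := norm_pos_iff.mpr hz
  have hfin : ∀ m : ℕ, ∑' n, eT w z n = qPoch (-z) (w ^ 2) m * ∑' n, eT w (z * (w ^ 2) ^ m) n := by
    intro m
    induction m with
    | zero => simp [qPoch]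
    | succ m ih =>
      rw [ih, euler_rec w (z * (w ^ 2) ^ m) h0 h1 (by positivity), qPoch, qPoch, Finset.prod_range_succ,
        pow_succ (w ^ 2) m, ← mul_assoc z]
      ring
  have hlim : Tendsto (fun m : ℕ => ∑' n, eT w (z * (w ^ 2) ^ m) n) atTop (𝓝 1) := by
    have key := tendsto_tsum_of_dominated_convergence (𝓕 := atTop)
      (f := fun (m : ℕ) (n : ℤ) => eT w (z * (w ^ 2) ^ m) n)
      (g := fun n : ℤ => if n = 0 then (1:ℂ) else 0)
      ((gB_summable (‖z‖ / ‖w‖) ‖w‖ (by positivity) h0 h1).mul_left C) ?_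
      (Eventually.of_forall fun m n => eT_bound w h0 C hC0 hC ‖z‖ hzp _ (by
        rw [norm_mul, norm_pow]
        exact mul_le_of_le_one_right (norm_nonneg _) (pow_le_one₀ (norm_nonneg _) hy.le)) n)
    · simpa using key
    · intro n
      rcases lt_trichotomy n 0 with h | h | h
      · simp only [eT, eI_neg _ n h, mul_zero, h.ne, if_false]
        exact tendsto_const_nhds
      · subst h
        have : eI (w ^ 2) 0 = 1 := by simpa [qPoch] using eI_nat (w ^ 2) 0
        simp [eT, this]
      · simp only [h.ne', if_false]
        lift n to ℕ using h.le
        have hj : n ≠ 0 := by rintro rfl; simp at h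
        have t := (tendsto_pow_atTop_nhds_zero_of_norm_lt_one hy).const_mul z
        have t2 := ((t.pow n).mul_const (w ^ ((n:ℤ) * (n - 1)))).mul_const (eI (w ^ 2) n)
        simpa [eT, hj] using t2
  have h2 := (qp_tendsto (-z) (w ^ 2) hy).mul hlim
  simp only [← hfin, mul_one] at h2
  exact tendsto_nhds_unique tendsto_const_nhds h2

lemma jtp (w z : ℂ) (h0 : 0 < ‖w‖) (h1 : ‖w‖ < 1) (hz : z ≠ 0) :
    HasSum (fun n : ℤ => z ^ n * w ^ (n * (n - 1)))
      (qPochInf (-z) (w ^ 2) * qPochInf (-(w ^ 2 / z)) (w ^ 2) * qPochInf (w ^ 2) (w ^ 2)) := by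
  have hw : w ≠ 0 := norm_pos_iff.mp h0
  have hy := sq_norm_lt w h1
  have hy0 : 0 < ‖w ^ 2‖ := norm_pos_iff.mpr (pow_ne_zero 2 hw)
  have hz' : w ^ 2 / z ≠ 0 := by positivity
  have s0 := eT_summable w z h0 h1 hz
  have s1 := eT_summable w (w ^ 2 / z) h0 h1 hz'
  have hP := qpInf_ne _ hy
  have sp := summable_mul_of_summable_norm s0.norm s1.norm
  have ep := tsum_mul_tsum_of_summable_norm s0.norm s1.norm
  rw [euler w z h0 h1 hz, euler w _ h0 h1 hz'] at ep
  let φ : ℤ × ℤ ≃ ℤ × ℤ :=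
    { toFun := fun p => (p.2 + p.1, p.2)
      invFun := fun p => (p.1 - p.2, p.2)
      left_inv := fun p => by simp
      right_inv := fun p => by simp }
  have e1 : ∀ p : ℤ × ℤ, eT w z (φ p).1 * eT w (w ^ 2 / z) (φ p).2
      = z ^ p.1 * w ^ (p.1 * (p.1 - 1)) * dT (w ^ 2) p.1 p.2 := by
    rintro ⟨n, b⟩
    simp only [φ, Equiv.coe_fn_mk, eT, dT, div_zpow]
    rw [zpow_add₀ hz]
    have a : w ^ ((b + n) * (b + n - 1)) * (w ^ 2) ^ b * w ^ (b * (b - 1))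
        = w ^ (n * (n - 1)) * (w ^ 2) ^ (b * (b + n)) := by
      rw [← zpow_natCast w 2, ← zpow_mul, ← zpow_mul, ← zpow_add₀ hw, ← zpow_add₀ hw, ← zpow_add₀ hw]
      congr 1; push_cast; ring
    have hzb : z ^ b ≠ 0 := zpow_ne_zero _ hz
    calc _ = (z ^ b * (z ^ b)⁻¹) * z ^ n * (w ^ ((b + n) * (b + n - 1)) * (w ^ 2) ^ b * w ^ (b * (b - 1)))
            * eI (w ^ 2) (b + n) * eI (w ^ 2) b := by rw [div_eq_mul_inv]; ring
      _ = _ := by rw [a, mul_inv_cancel₀ hzb]; ring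
  rw [← φ.summable_iff] at sp
  rw [← φ.tsum_eq] at ep
  simp only [Function.comp_def, e1] at sp ep
  have so := sp.prod
  rw [sp.tsum_prod] at ep
  simp only [tsum_mul_left, durfee (w ^ 2) hy0 hy] at so ep
  have so' : Summable (fun n : ℤ => z ^ n * w ^ (n * (n - 1))) := by
    have := so.mul_right (qPochInf (w ^ 2) (w ^ 2))
    simpa [mul_assoc, inv_mul_cancel₀ hP] using this
  rw [tsum_mul_right] at ep
  rw [ep, mul_assoc, inv_mul_cancel₀ hP, mul_one]
  exact so'.hasSum

lemma quad_bound (i j k l : ℤ) : i^2 + j^2 + k^2 + l^2 ≤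
    6 * (i^2 + j^2 + k^2 + l^2 - i*j - i*k - i*l + j*k + j*l) := by
  have h : ((i:ℚ)^2 + j^2 + k^2 + l^2) ≤
    6 * (i^2 + j^2 + k^2 + l^2 - i*j - i*k - i*l + j*k + j*l) := by
    nlinarith [sq_nonneg ((i:ℚ) - 3/5*(j+k+l)), sq_nonneg ((j:ℚ) + 3/8*(k+l)),
      sq_nonneg ((k:ℚ) - 9/11*l), sq_nonneg (l:ℚ)]
  exact_mod_cast h

lemma zpow_le_V (u : ℂ) (hu : u ≠ 0) (V : ℝ) (hV : 1 ≤ V) (h1 : ‖u‖ ≤ V) (h2 : ‖u‖⁻¹ ≤ V) (i j k l : ℕ) :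
    ‖u‖ ^ ((i:ℤ) - j - k) ≤ V ^ i * V ^ j * V ^ k * V ^ l := by
  have hp := norm_pos_iff.mpr hu
  have e : ‖u‖ ^ ((i:ℤ) - j - k) = ‖u‖ ^ i * ‖u‖⁻¹ ^ j * ‖u‖⁻¹ ^ k * 1 := by
    rw [zpow_sub₀ hp.ne', zpow_sub₀ hp.ne', zpow_natCast, zpow_natCast, zpow_natCast,
      inv_pow, inv_pow, div_eq_mul_inv, div_eq_mul_inv, mul_one]
  rw [e]
  gcongr
  exact one_le_pow₀ hV

/-- The summand on the integer lattice. -/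
noncomputable def bT (x u : ℂ) (p : (ℤ × ℤ) × (ℤ × ℤ)) : ℂ :=
  u ^ p.1.1 * x ^ (p.1.1 ^ 2 - p.1.1 * p.1.2 + p.1.2 ^ 2) * (dT x p.1.2 p.2.1 * dT x (p.2.1 + p.1.1) p.2.2)

/-- The reindexing map. -/
def ph (p : ℕ × ℕ × ℕ × ℕ) : (ℤ × ℤ) × (ℤ × ℤ) :=
  (((p.1:ℤ) - p.2.1 - p.2.2.1, (p.2.2.2:ℤ) - p.2.2.1), ((p.2.2.1:ℤ), (p.2.1:ℤ)))

lemma ph_inj : Function.Injective ph := by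
  rintro ⟨i, j, k, l⟩ ⟨i', j', k', l'⟩ h
  simp only [ph, Prod.mk.injEq] at h ⊢
  omega

lemma bT_support (x u : ℂ) : Function.support (bT x u) ⊆ Set.range ph := by
  rintro ⟨⟨N, M⟩, ⟨k, j⟩⟩ h
  rw [Function.mem_support] at h
  have hk : 0 ≤ k := by
    by_contra hc; apply h; simp [bT, dT, eI_neg x k (by omega)]
  have hj : 0 ≤ j := by
    by_contra hc; apply h; simp [bT, dT, eI_neg x j (by omega)]
  have hl : 0 ≤ k + M := by
    by_contra hc; apply h; simp [bT, dT, eI_neg x (k + M) (by omega)]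
  have hi : 0 ≤ j + (k + N) := by
    by_contra hc; apply h; simp [bT, dT, eI_neg x (j + (k + N)) (by omega)]
  refine ⟨((j + (k + N)).toNat, j.toNat, k.toNat, (k + M).toNat), ?_⟩
  simp only [ph, Prod.mk.injEq]
  omega

lemma bT_ph (x u : ℂ) (hx : x ≠ 0) (i j k l : ℕ) : bT x u (ph (i, j, k, l)) =
    u ^ ((i:ℤ) - j - k) *
    x ^ ((i:ℤ)^2 + (j:ℤ)^2 + (k:ℤ)^2 + (l:ℤ)^2 - i*j - i*k - i*l + j*k + j*l) *
      (eI x i * eI x j * eI x k * eI x l) := by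
  have a1 : (k:ℤ) + (l - k) = l := by ring
  have a2 : (j:ℤ) + (k + (i - j - k)) = i := by ring
  simp only [bT, ph, dT, a1, a2]
  have a3 : x ^ ((i:ℤ)^2 + (j:ℤ)^2 + (k:ℤ)^2 + (l:ℤ)^2 - i*j - i*k - i*l + j*k + j*l)
    = x ^ (((i:ℤ) - j - k) ^ 2 - ((i:ℤ) - j - k) * (l - k) + ((l:ℤ) - k)^2) * x ^ ((k:ℤ) * l) * x ^ ((j:ℤ) * i) := by
    rw [← zpow_add₀ hx, ← zpow_add₀ hx]; congr 1; ring
  rw [a3]; ring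

lemma bT_ph_summable (x u : ℂ) (h0 : 0 < ‖x‖) (h1 : ‖x‖ < 1) (hu : u ≠ 0) :
    Summable (bT x u ∘ ph) := by
  obtain ⟨C, hC0, hC⟩ := eI_bound x h1
  have hx : x ≠ 0 := norm_pos_iff.mp h0
  set V := max 1 (max ‖u‖ ‖u‖⁻¹) with hVd
  have hV : 1 ≤ V := le_max_left _ _
  have hV1 : ‖u‖ ≤ V := (le_max_left _ _).trans (le_max_right _ _)
  have hV2 : ‖u‖⁻¹ ≤ V := (le_max_right _ _).trans (le_max_right _ _)
  have hV0 : 0 < V := by linarith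
  set ρ := ‖x‖ ^ ((1:ℝ)/6) with hρ
  have hρ0 : 0 < ρ := by positivity
  have hρ1 : ρ < 1 := Real.rpow_lt_one h0.le h1 (by norm_num)
  have hρ6 : ‖x‖ = ρ ^ (6:ℤ) := by
    rw [hρ, ← Real.rpow_intCast, ← Real.rpow_mul h0.le]; norm_num
  have g := gauss_summable V ρ hV0 hρ0 hρ1
  have nn : ∀ n : ℕ, 0 ≤ V ^ n * ρ ^ (n ^ 2) := fun n => by positivity
  have g2 := g.mul_of_nonneg g nn nn
  have g3 := g.mul_of_nonneg g2 nn (fun p => mul_nonneg (nn _) (nn _))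
  have g4 := g.mul_of_nonneg g3 nn (fun p => mul_nonneg (nn _) (mul_nonneg (nn _) (nn _)))
  refine Summable.of_norm_bounded (g4.mul_left (C ^ 4)) ?_
  rintro ⟨i, j, k, l⟩
  rw [Function.comp, bT_ph x u hx]
  simp only [norm_mul, norm_zpow]
  have b1 : ‖x‖ ^ ((i:ℤ)^2 + (j:ℤ)^2 + (k:ℤ)^2 + (l:ℤ)^2 - i*j - i*k - i*l + j*k + j*l)
      ≤ ρ ^ (i^2) * ρ ^ (j^2) * ρ ^ (k^2) * ρ ^ (l^2) := by
    rw [hρ6, ← zpow_mul, ← pow_add, ← pow_add, ← pow_add, ← zpow_natCast]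
    apply zpow_le_zpow_right_of_le_one₀ hρ0 hρ1.le
    push_cast
    exact quad_bound i j k l
  calc _ ≤ (V ^ i * V ^ j * V ^ k * V ^ l) * (ρ ^ (i^2) * ρ ^ (j^2) * ρ ^ (k^2) * ρ ^ (l^2)) * (C * C * C * C) := by
        gcongr
        · exact zpow_le_V u hu V hV hV1 hV2 i j k l
        all_goals exact hC _
    _ = _ := by ring

/-- The theta summand. -/
noncomputable def th (x u : ℂ) (p : ℤ × ℤ) : ℂ := u ^ p.1 * x ^ (p.1 ^ 2 - p.1 * p.2 + p.2 ^ 2)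

lemma bT_tsum (x u : ℂ) (h0 : 0 < ‖x‖) (h1 : ‖x‖ < 1) (hu : u ≠ 0) :
    ∑' p, bT x u (ph p) = (∑' p, th x u p) * ((qPochInf x x)⁻¹ * (qPochInf x x)⁻¹) := by
  have s : Summable (bT x u) := by
    rw [← ph_inj.summable_iff]
    · exact bT_ph_summable x u h0 h1 hu
    · intro p hp
      by_contra hc
      exact hp (bT_support x u hc)
  rw [ph_inj.tsum_eq (bT_support x u), s.tsum_prod, ← tsum_mul_right]
  refine tsum_congr fun p => ?_
  have sf := s.prod_factor p
  rw [sf.tsum_prod]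
  simp only [bT, tsum_mul_left, durfee x h0 h1]
  rw [tsum_mul_right, durfee x h0 h1, th]

/-- even part -/
def f1 (p : ℤ × ℤ) : ℤ × ℤ := (p.1 + p.2, 2 * p.2)

/-- odd part -/
def f2 (p : ℤ × ℤ) : ℤ × ℤ := (p.1 + p.2, 2 * p.2 + 1)

lemma f1_inj : Function.Injective f1 := by
  rintro ⟨a, b⟩ ⟨c, d⟩ h
  simp only [f1, Prod.mk.injEq] at h ⊢
  omega

lemma f2_inj : Function.Injective f2 := by
  rintro ⟨a, b⟩ ⟨c, d⟩ h
  simp only [f2, Prod.mk.injEq] at h ⊢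
  omega

lemma f12_compl : IsCompl (Set.range f1) (Set.range f2) := by
  constructor
  · rw [Set.disjoint_left]
    rintro _ ⟨⟨a, b⟩, rfl⟩ ⟨⟨c, d⟩, h⟩
    simp only [f1, f2, Prod.mk.injEq] at h
    omega
  · rw [codisjoint_iff_le_sup]
    rintro ⟨a, b⟩ -
    rcases Int.even_or_odd' b with ⟨m, rfl | rfl⟩
    · exact Or.inl ⟨(a - m, m), by simp [f1]⟩
    · exact Or.inr ⟨(a - m, m), by simp [f2]⟩

lemma th_f1 (q u : ℂ) (hq : q ≠ 0) (hu : u ≠ 0) (n m : ℤ) : th (q ^ 2) u (f1 (n, m)) =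
    ((q^2*u) ^ n * (q^2) ^ (n * (n - 1))) * ((q^6*u) ^ m * (q^6) ^ (m * (m - 1))) := by
  simp only [th, f1, mul_zpow, ← zpow_natCast q, ← zpow_mul, zpow_add₀ hu]
  have : q ^ (((2:ℕ):ℤ) * ((n + m)^2 - (n+m) * (2 * m) + (2*m)^2)) =
    q ^ (((2:ℕ):ℤ) * n) * q ^ (((2:ℕ):ℤ) * (n * (n - 1))) * q ^ (((6:ℕ):ℤ) * m) * q ^ (((6:ℕ):ℤ) * (m * (m - 1))) := by
    simp only [← zpow_add₀ hq]
    congr 1; push_cast; ring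
  rw [this]; ring

lemma th_f2 (q u : ℂ) (hq : q ≠ 0) (hu : u ≠ 0) (n m : ℤ) : th (q ^ 2) u (f2 (n, m)) =
    q^2 * ((u ^ n * (q^2) ^ (n * (n - 1))) * ((q^12*u) ^ m * (q^6) ^ (m * (m - 1)))) := by
  simp only [th, f2, mul_zpow, ← zpow_natCast q, ← zpow_mul, zpow_add₀ hu]
  have : q ^ (((2:ℕ):ℤ) * ((n + m)^2 - (n+m) * (2 * m + 1) + (2*m + 1)^2)) =
    q ^ ((2:ℕ):ℤ) * q ^ (((2:ℕ):ℤ) * (n * (n - 1))) * q ^ (((12:ℕ):ℤ) * m) * q ^ (((6:ℕ):ℤ) * (m * (m - 1))) := by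
    simp only [← zpow_add₀ hq]
    congr 1; push_cast; ring
  rw [this]; ring

lemma comb (F : ℤ × ℤ → ℂ) (a b c d : ℤ → ℂ) (A B C D s : ℂ) (ha : HasSum a A) (hb : HasSum b B)
    (hc : HasSum c C) (hd : HasSum d D) (e1 : ∀ n m, F (f1 (n, m)) = a n * b m)
    (e2 : ∀ n m, F (f2 (n, m)) = s * (c n * d m)) : HasSum F (A * B + s * C * D) := by
  have P := ha.mul hb (summable_mul_of_summable_norm ha.summable.norm hb.summable.norm)
  have Q := (hc.mul hd (summable_mul_of_summable_norm hc.summable.norm hd.summable.norm)).mul_left s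
  rw [← mul_assoc s] at Q
  refine HasSum.add_isCompl f12_compl (f1_inj.hasSum_range_iff.2 ?_) (f2_inj.hasSum_range_iff.2 ?_)
  · have hf : F ∘ f1 = fun p => a p.1 * b p.2 := funext fun p => e1 p.1 p.2
    rw [hf]; exact P
  · have hf : F ∘ f2 = fun p => s * (c p.1 * d p.2) := funext fun p => e2 p.1 p.2
    rw [hf]; exact Q

lemma th_hasSum (q u : ℂ) (h0 : 0 < ‖q‖) (h1 : ‖q‖ < 1) (hu : u ≠ 0) :
    HasSum (th (q ^ 2) u) 
      ((qPochInf (-q^2*u) (q^4) * qPochInf (-q^2/u) (q^4) * qPochInf (q^4) (q^4)) *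
        (qPochInf (-q^6*u) (q^12) * qPochInf (-q^6/u) (q^12) * qPochInf (q^12) (q^12))
      + q^2 * (qPochInf (-u) (q^4) * qPochInf (-q^4/u) (q^4) * qPochInf (q^4) (q^4)) *
        (qPochInf (-q^12*u) (q^12) * qPochInf (-1/u) (q^12) * qPochInf (q^12) (q^12))) := by
  have hq : q ≠ 0 := norm_pos_iff.mp h0
  have w2 : 0 < ‖q ^ 2‖ := norm_pos_iff.mpr (pow_ne_zero _ hq)
  have w6 : 0 < ‖q ^ 6‖ := norm_pos_iff.mpr (pow_ne_zero _ hq)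
  have v2 : ‖q ^ 2‖ < 1 := by rw [norm_pow]; exact pow_lt_one₀ h0.le h1 (by norm_num)
  have v6 : ‖q ^ 6‖ < 1 := by rw [norm_pow]; exact pow_lt_one₀ h0.le h1 (by norm_num)
  have t1 := jtp (q^2) (q^2*u) w2 v2 (mul_ne_zero (pow_ne_zero _ hq) hu)
  have t2 := jtp (q^6) (q^6*u) w6 v6 (mul_ne_zero (pow_ne_zero _ hq) hu)
  have t3 := jtp (q^2) u w2 v2 hu
  have t4 := jtp (q^6) (q^12*u) w6 v6 (mul_ne_zero (pow_ne_zero _ hq) hu)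
  have r1 : -((q^2)^2 / (q^2*u)) = -q^2/u := by field_simp
  have r2 : -((q^6)^2 / (q^6*u)) = -q^6/u := by field_simp
  have r3 : -((q^2)^2 / u) = -q^4/u := by ring
  have r4 : -((q^6)^2 / (q^12*u)) = -1/u := by field_simp
  have r5 : (q^2)^2 = q^4 := by ring
  have r6 : (q^6)^2 = q^12 := by ring
  rw [r1, r5, ← neg_mul] at t1
  rw [r2, r6, ← neg_mul] at t2
  rw [r3, r5] at t3
  rw [r4, r6, ← neg_mul] at t4
  exact comb _ _ _ _ _ _ _ _ _ _ t1 t2 t3 t4 (th_f1 q u hq hu) (th_f2 q u hq hu)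

theorem stmt_10 (q : ℂ) (h0 : 0 < ‖q‖) (h1 : ‖q‖ < 1) (u : ℂ) (hu : u ≠ 0) :
    (∑' p : ℕ × ℕ × ℕ × ℕ,
      (fun (i j k l : ℕ) =>
        u ^ (((i:ℤ) - (j:ℤ) - (k:ℤ)) : ℤ) * q ^ ((2*(i:ℤ)^2 + 2*(j:ℤ)^2 + 2*(k:ℤ)^2 + 2*(l:ℤ)^2 - 2*(i:ℤ)*(j:ℤ) - 2*(i:ℤ)*(k:ℤ) - 2*(i:ℤ)*(l:ℤ) + 2*(j:ℤ)*(k:ℤ) + 2*(j:ℤ)*(l:ℤ)) : ℤ) /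
          (qPoch (q ^ 2) (q ^ 2) i * qPoch (q ^ 2) (q ^ 2) j * qPoch (q ^ 2) (q ^ 2) k * qPoch (q ^ 2) (q ^ 2) l))
        p.1 p.2.1 p.2.2.1 p.2.2.2)
    = (1 / (J q 2)^2) *
      ((qPochInf (-q^2*u) (q^4) * qPochInf (-q^2/u) (q^4) * qPochInf (q^4) (q^4)) *
        (qPochInf (-q^6*u) (q^12) * qPochInf (-q^6/u) (q^12) * qPochInf (q^12) (q^12))
      + q^2 * (qPochInf (-u) (q^4) * qPochInf (-q^4/u) (q^4) * qPochInf (q^4) (q^4)) *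
        (qPochInf (-q^12*u) (q^12) * qPochInf (-1/u) (q^12) * qPochInf (q^12) (q^12))) := by
  have hq : q ≠ 0 := norm_pos_iff.mp h0
  have w2 : 0 < ‖q ^ 2‖ := norm_pos_iff.mpr (pow_ne_zero _ hq)
  have v2 : ‖q ^ 2‖ < 1 := sq_norm_lt q h1
  rw [← (th_hasSum q u h0 h1 hu).tsum_eq, J, one_div, sq (qPochInf _ _), mul_inv, mul_comm _ (∑' p, th (q ^ 2) u p),
    ← bT_tsum (q ^ 2) u w2 v2 hu]
  refine tsum_congr ?_
  rintro ⟨i, j, k, l⟩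
  rw [bT_ph _ _ (pow_ne_zero _ hq)]
  simp only [eI_nat]
  rw [div_eq_mul_inv, mul_inv, mul_inv, mul_inv, ← zpow_natCast q 2, ← zpow_mul]
  congr 3
  push_cast
  ring
end

section
/- For every complex number q with 0 < |q| < 1, one has ∑_{i,j,k,l ≥ 0} q^{i²+j²+k²+l²−ij−ik−il+jk+jl+j+l} / ((q;q)_i (q;q)_j (q;q)_k (q;q)_l) = (1/3) · (J_6² / (J_1² J_12)) · ( J_2⁵ J_{2,12} / (J_1² J_4² J_{1,6}) + 2 J_4³ / J_2² ). -/
open scoped BigOperators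

namespace NS
open Filter Topology

/-- `1/(q;q)_n`, extended by zero to negative `n`. -/
noncomputable def zp (q : ℂ) (n : ℤ) : ℂ := if 0 ≤ n then (qPoch q q n.toNat)⁻¹ else 0

lemma zp_nat (q : ℂ) (n : ℕ) : zp q (n : ℤ) = (qPoch q q n)⁻¹ := by simp [zp]

lemma zp_neg (q : ℂ) {n : ℤ} (h : n < 0) : zp q n = 0 := by simp [zp, h]

lemma zp_zero (q : ℂ) : zp q 0 = 1 := by simp [zp, qPoch]

lemma one_sub_pow_ne {q : ℂ} (h1 : ‖q‖ < 1) (n : ℕ) : 1 - q ^ (n + 1) ≠ 0 := by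
  intro h
  have h2 : ‖q ^ (n + 1)‖ = 1 := by rw [← sub_eq_zero.mp h]; simp
  rw [norm_pow] at h2
  have := pow_lt_one₀ (norm_nonneg q) h1 (Nat.succ_ne_zero n)
  exact absurd h2 this.ne

lemma one_sub_zpow_ne {q : ℂ} (h1 : ‖q‖ < 1) {n : ℤ} (hn : 0 < n) : 1 - q ^ n ≠ 0 := by
  obtain ⟨k, rfl⟩ : ∃ k : ℕ, n = ((k + 1 : ℕ) : ℤ) := ⟨(n - 1).toNat, by omega⟩
  rw [zpow_natCast]
  exact one_sub_pow_ne h1 k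

lemma zp_rec {q : ℂ} (h1 : ‖q‖ < 1) (n : ℤ) : (1 - q ^ n) * zp q n = zp q (n - 1) := by
  rcases lt_trichotomy n 0 with h | h | h
  · rw [zp_neg q h, zp_neg q (by omega)]; simp
  · subst h; rw [zp_neg q (n := 0 - 1) (by omega)]; simp
  · obtain ⟨k, rfl⟩ : ∃ k : ℕ, n = ((k + 1 : ℕ) : ℤ) := ⟨(n - 1).toNat, by omega⟩
    have : ((k + 1 : ℕ) : ℤ) - 1 = (k : ℕ) := by push_cast; ring
    rw [this, zp_nat, zp_nat, zpow_natCast]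
    have h3 : qPoch q q (k + 1) = qPoch q q k * (1 - q ^ (k + 1)) := by
      simp [qPoch, Finset.prod_range_succ, pow_succ']
    rw [h3, mul_inv]
    field_simp [one_sub_pow_ne h1 k]

lemma summable_pow_norm {p a : ℂ} (h1 : ‖p‖ < 1) : Summable fun n : ℕ => ‖-(a * p ^ n)‖ := by
  simp only [norm_neg, norm_mul, norm_pow]
  exact (summable_geometric_of_lt_one (norm_nonneg _) h1).mul_left _

lemma mult_poch {p : ℂ} (a : ℂ) (h1 : ‖p‖ < 1) : Multipliable fun n : ℕ => 1 - a * p ^ n := by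
  simpa [sub_eq_add_neg] using multipliable_one_add_of_summable (summable_pow_norm (a := a) h1)

lemma poch_tendsto {p : ℂ} (a : ℂ) (h1 : ‖p‖ < 1) :
    Tendsto (fun n => qPoch a p n) atTop (𝓝 (qPochInf a p)) :=
  (mult_poch a h1).hasProd.tendsto_prod_nat

lemma pochInf_ne {p a : ℂ} (h1 : ‖p‖ < 1) (ha : ‖a‖ < 1) : qPochInf a p ≠ 0 := by
  have := tprod_one_add_ne_zero_of_summable (f := fun n : ℕ => -(a * p ^ n)) ?_
    (summable_pow_norm h1)
  · simpa [qPochInf, sub_eq_add_neg] using this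
  · intro n h
    have h2 : a * p ^ n = 1 := by linear_combination -h
    have h3 : ‖a * p ^ n‖ = 1 := by rw [h2]; simp
    rw [norm_mul, norm_pow] at h3
    have h4 : ‖p‖ ^ n ≤ 1 := pow_le_one₀ (norm_nonneg p) h1.le
    have h5 := norm_nonneg a
    nlinarith

lemma zp_tendsto {q : ℂ} (h1 : ‖q‖ < 1) :
    Tendsto (fun n : ℕ => zp q (n : ℤ)) atTop (𝓝 (qPochInf q q)⁻¹) := by
  simp only [zp_nat]
  exact (poch_tendsto q h1).inv₀ (pochInf_ne h1 h1)

lemma zp_bdd {q : ℂ} (h1 : ‖q‖ < 1) : ∃ C : ℝ, 0 < C ∧ ∀ n : ℤ, ‖zp q n‖ ≤ C := by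
  obtain ⟨C, hC⟩ := (zp_tendsto h1).norm.bddAbove_range
  refine ⟨max C 1, by positivity, fun n => ?_⟩
  rcases lt_or_ge n 0 with h | h
  · rw [zp_neg q h]; simp
  · lift n to ℕ using h
    exact le_max_of_le_left (hC ⟨n, rfl⟩)

/-- summability of Gaussian-type sums -/
lemma summable_gauss {r : ℝ} (h0 : 0 < r) (h1 : r < 1) (b : ℤ) :
    Summable fun n : ℤ => r ^ (n ^ 2 + b * n) := by
  set K : ℤ := (|b| + 1) ^ 2
  have key : ∀ n : ℤ, |n| - K ≤ n ^ 2 + b * n := by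
    intro n
    have h2 : b * n ≥ -(|b| * |n|) := by rw [← abs_mul]; exact neg_abs_le _
    have h3 : n ^ 2 = |n| ^ 2 := (sq_abs n).symm
    have h4 := abs_nonneg n
    have h5 := abs_nonneg b
    simp only [K]
    nlinarith [sq_nonneg (|n| - (|b| + 1))]
  have geo : Summable fun n : ℕ => r ^ n := summable_geometric_of_lt_one h0.le h1
  have base : Summable fun n : ℤ => r ^ (|n| - K) := by
    apply Summable.of_nat_of_neg
    · simp only [Nat.abs_cast, zpow_sub₀ h0.ne', zpow_natCast]
      exact geo.div_const _
    · simp only [abs_neg, Nat.abs_cast, zpow_sub₀ h0.ne', zpow_natCast]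
      exact geo.div_const _
  exact base.of_nonneg_of_le (fun n => (zpow_pos h0 _).le)
    (fun n => zpow_le_zpow_right_of_le_one₀ h0 h1.le (key n))

/-- The bilateral summand of the Nahm sum. -/
noncomputable def T (q : ℂ) (a b c d : ℤ) (v : ℤ × ℤ × ℤ × ℤ) : ℂ :=
  q ^ (v.1 ^ 2 + v.2.1 ^ 2 + v.2.2.1 ^ 2 + v.2.2.2 ^ 2 - v.1 * v.2.1 - v.1 * v.2.2.1
      - v.1 * v.2.2.2 + v.2.1 * v.2.2.1 + v.2.1 * v.2.2.2
      + (a * v.1 + b * v.2.1 + c * v.2.2.1 + d * v.2.2.2))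
    * (zp q v.1 * zp q v.2.1 * zp q v.2.2.1 * zp q v.2.2.2)

lemma summable_T {q : ℂ} (h0 : q ≠ 0) (h1 : ‖q‖ < 1) (a b c d : ℤ) : Summable (T q a b c d) := by
  obtain ⟨C, hC0, hC⟩ := zp_bdd h1
  have hq : 0 < ‖q‖ := norm_pos_iff.mpr h0
  obtain ⟨r, hr0, hr1, hr⟩ : ∃ r : ℝ, 0 < r ∧ r < 1 ∧ r ^ 5 = ‖q‖ := by
    refine ⟨‖q‖ ^ ((1:ℝ) / 5), by positivity, Real.rpow_lt_one hq.le h1 (by norm_num), ?_⟩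
    rw [← Real.rpow_natCast, ← Real.rpow_mul hq.le]; norm_num
  have g := fun b : ℤ => summable_gauss hr0 hr1 (5 * b)
  have nn : ∀ b : ℤ, 0 ≤ fun n : ℤ => r ^ (n ^ 2 + 5 * b * n) := fun b n => (zpow_pos hr0 _).le
  have s2 := (g c).mul_of_nonneg (g d) (nn c) (nn d)
  have s3 := (g b).mul_of_nonneg s2 (nn b) (fun _ => mul_nonneg (nn c _) (nn d _))
  have s4 := (g a).mul_of_nonneg s3 (nn a)
    (fun _ => mul_nonneg (nn b _) (mul_nonneg (nn c _) (nn d _)))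
  refine Summable.of_norm_bounded (s4.mul_left (C * C * C * C)) ?_
  rintro ⟨i, j, k, l⟩
  simp only [T, norm_mul, norm_zpow]
  rw [← hr, ← zpow_natCast r 5, ← zpow_mul, ← zpow_add₀ hr0.ne', ← zpow_add₀ hr0.ne',
    ← zpow_add₀ hr0.ne', mul_comm]
  have e1 := hC i
  have e2 := hC j
  have e3 := hC k
  have e4 := hC l
  have hp : r ^ (((5 : ℕ) : ℤ) * (i ^ 2 + j ^ 2 + k ^ 2 + l ^ 2 - i * j - i * k
      - i * l + j * k + j * l + (a * i + b * j + c * k + d * l))) ≤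
      r ^ (i ^ 2 + 5 * a * i + (j ^ 2 + 5 * b * j + (k ^ 2 + 5 * c * k + (l ^ 2 + 5 * d * l)))) := by
    apply zpow_le_zpow_right_of_le_one₀ hr0 hr1.le
    push_cast
    nlinarith [sq_nonneg (j + k + l - i - i), sq_nonneg (j + k + l - i + j), sq_nonneg (i + j),
      sq_nonneg (k - l), sq_nonneg i, sq_nonneg j, sq_nonneg (j + k + l - i)]
  have := zpow_pos hr0 (((5 : ℕ) : ℤ) * (i ^ 2 + j ^ 2 + k ^ 2 + l ^ 2 - i * j - i * k
      - i * l + j * k + j * l + (a * i + b * j + c * k + d * l)))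
  gcongr

lemma T_rec_j {q : ℂ} (h0 : q ≠ 0) (h1 : ‖q‖ < 1) (a b c d : ℤ) :
    ∑' v, T q a b c d v = ∑' v, T q a (b + 1) c d v
      + q ^ (b + 1) * ∑' v, T q (a - 1) (b + 2) (c + 1) (d + 1) v := by
  rw [← sub_eq_iff_eq_add', ← (summable_T h0 h1 a b c d).tsum_sub (summable_T h0 h1 _ _ _ _),
    ← tsum_mul_left]
  let e : ℤ × ℤ × ℤ × ℤ ≃ ℤ × ℤ × ℤ × ℤ :=
    (Equiv.refl ℤ).prodCongr ((Equiv.addRight (1:ℤ)).prodCongr (Equiv.refl _))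
  rw [← e.tsum_eq]
  congr 1; ext ⟨i, j, k, l⟩
  simp only [e, T, Equiv.prodCongr_apply, Prod.map, Equiv.refl_apply, Equiv.coe_addRight]
  have hz := zp_rec h1 (j + 1)
  rw [show j + 1 - 1 = j by ring] at hz
  rw [← hz]
  have e1 : i ^ 2 + (j+1) ^ 2 + k ^ 2 + l ^ 2 - i * (j+1) - i * k
      - i * l + (j+1) * k + (j+1) * l + (a * i + (b+1) * (j+1) + c * k + d * l) =
      (i ^ 2 + (j+1) ^ 2 + k ^ 2 + l ^ 2 - i * (j+1) - i * k
      - i * l + (j+1) * k + (j+1) * l + (a * i + b * (j+1) + c * k + d * l)) + (j + 1) := by ring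
  have e2 : i ^ 2 + (j+1) ^ 2 + k ^ 2 + l ^ 2 - i * (j+1) - i * k
      - i * l + (j+1) * k + (j+1) * l + (a * i + b * (j+1) + c * k + d * l) =
      (b + 1) + (i ^ 2 + j ^ 2 + k ^ 2 + l ^ 2 - i * j - i * k
      - i * l + j * k + j * l + ((a-1) * i + (b+2) * j + (c+1) * k + (d+1) * l)) := by ring
  rw [e1, zpow_add₀ h0 _ (j+1), e2, zpow_add₀ h0 (b+1)]
  ring

lemma T_rec_k {q : ℂ} (h0 : q ≠ 0) (h1 : ‖q‖ < 1) (a b c d : ℤ) :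
    ∑' v, T q a b c d v = ∑' v, T q a b (c + 1) d v
      + q ^ (c + 1) * ∑' v, T q (a - 1) (b + 1) (c + 2) d v := by
  rw [← sub_eq_iff_eq_add', ← (summable_T h0 h1 a b c d).tsum_sub (summable_T h0 h1 _ _ _ _),
    ← tsum_mul_left]
  let e : ℤ × ℤ × ℤ × ℤ ≃ ℤ × ℤ × ℤ × ℤ :=
    (Equiv.refl ℤ).prodCongr ((Equiv.refl ℤ).prodCongr ((Equiv.addRight (1:ℤ)).prodCongr (Equiv.refl _)))
  rw [← e.tsum_eq]
  congr 1; ext ⟨i, j, k, l⟩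
  simp only [e, T, Equiv.prodCongr_apply, Prod.map, Equiv.refl_apply, Equiv.coe_addRight]
  have hz := zp_rec h1 (k + 1)
  rw [show k + 1 - 1 = k by ring] at hz
  rw [← hz]
  have e1 : i ^ 2 + j ^ 2 + (k+1) ^ 2 + l ^ 2 - i * j - i * (k+1)
      - i * l + j * (k+1) + j * l + (a * i + b * j + (c+1) * (k+1) + d * l) =
      (i ^ 2 + j ^ 2 + (k+1) ^ 2 + l ^ 2 - i * j - i * (k+1)
      - i * l + j * (k+1) + j * l + (a * i + b * j + c * (k+1) + d * l)) + (k + 1) := by ring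
  have e2 : i ^ 2 + j ^ 2 + (k+1) ^ 2 + l ^ 2 - i * j - i * (k+1)
      - i * l + j * (k+1) + j * l + (a * i + b * j + c * (k+1) + d * l) =
      (c + 1) + (i ^ 2 + j ^ 2 + k ^ 2 + l ^ 2 - i * j - i * k
      - i * l + j * k + j * l + ((a-1) * i + (b+1) * j + (c+2) * k + d * l)) := by ring
  rw [e1, zpow_add₀ h0 _ (k+1), e2, zpow_add₀ h0 (c+1)]
  ring

lemma T_swap (q : ℂ) (a b c d : ℤ) : ∑' v, T q a b c d v = ∑' v, T q a b d c v := by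
  let e : ℤ × ℤ × ℤ × ℤ ≃ ℤ × ℤ × ℤ × ℤ :=
    (Equiv.refl ℤ).prodCongr ((Equiv.refl ℤ).prodCongr (Equiv.prodComm ℤ ℤ))
  rw [← e.tsum_eq]
  congr 1; ext ⟨i, j, k, l⟩
  simp only [e, T, Equiv.prodCongr_apply, Prod.map, Equiv.refl_apply, Equiv.prodComm_apply, Prod.swap]
  congr 1
  · congr 1; ring
  · ring

noncomputable def w (q : ℂ) (i B A j : ℤ) : ℂ :=
  zp q j * zp q (A - j) * zp q (B - j) * q ^ ((A - j) * (B - j) + i * j)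

lemma w_summable (q : ℂ) (i B A : ℤ) (g : ℤ → ℂ) : Summable fun j => w q i B A j * g j := by
  apply summable_of_ne_finset_zero (s := Finset.Icc 0 A)
  intro j hj
  rw [Finset.mem_Icc, not_and_or, not_le, not_le] at hj
  rcases hj with hj | hj
  · simp [w, zp_neg q hj]
  · simp [w, zp_neg q (show A - j < 0 by omega)]

lemma w_F1 {q : ℂ} (h0 : q ≠ 0) (h1 : ‖q‖ < 1) (i B A j : ℤ) :
    w q i B A j * (1 - q ^ (A - j)) = q ^ B * q ^ (-j) * w q i B (A - 1) j := by
  have h := zp_rec h1 (A - j)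
  simp only [w]
  rw [show A - 1 - j = A - j - 1 by ring, ← h,
    show (A - j) * (B - j) + i * j = B + (-j) + ((A - j - 1) * (B - j) + i * j) by ring,
    zpow_add₀ h0, zpow_add₀ h0 B]
  ring

lemma w_F2 {q : ℂ} (h0 : q ≠ 0) (h1 : ‖q‖ < 1) (i B A j : ℤ) :
    w q i B A (j + 1) * (1 - q ^ (j + 1)) =
      q ^ i * (1 - q ^ B * q ^ (-j)) * q ^ (-(A - 1 - j)) * w q i B (A - 1) j := by
  have h := zp_rec h1 (j + 1)
  have h' := zp_rec h1 (B - j)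
  rw [show j + 1 - 1 = j by ring] at h
  simp only [w]
  rw [← h, show A - (j + 1) = A - 1 - j by ring, show B - (j + 1) = B - j - 1 by ring, ← h',
    show (A - 1 - j) * (B - j - 1) + i * (j + 1)
      = i + (-(A - 1 - j)) + ((A - 1 - j) * (B - j) + i * j) by ring,
    zpow_add₀ h0, zpow_add₀ h0 i, ← zpow_add₀ h0 B, ← sub_eq_add_neg]
  ring

noncomputable def W (q : ℂ) (i B A : ℤ) : ℂ := ∑' j, w q i B A j

lemma w_summable' (q : ℂ) (i B A : ℤ) : Summable fun j => w q i B A j := by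
  simpa using w_summable q i B A (fun _ => 1)

lemma tsum_shift (f : ℤ → ℂ) : ∑' j, f j = ∑' j, f (j + 1) :=
  ((Equiv.addRight (1:ℤ)).tsum_eq f).symm

lemma W_rec1 {q : ℂ} (h0 : q ≠ 0) (h1 : ‖q‖ < 1) (i B A : ℤ) :
    (1 - q ^ A) * W q i B A =
      q ^ B * (1 - q ^ i) * (∑' j, w q i B (A - 1) j * q ^ (-j)) + q ^ i * W q i B (A - 1) := by
  have e1 : (1 - q ^ A) * W q i B A = ∑' j, w q i B A j * (1 - q ^ (A - j))
      + ∑' j, w q i B A j * (q ^ (A - j) * (1 - q ^ j)) := by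
    rw [W, ← tsum_mul_left, ← (w_summable q i B A _).tsum_add (w_summable q i B A _)]
    congr 1; ext j
    rw [show A = (A - j) + j by ring, zpow_add₀ h0]
    simp only [add_sub_cancel_right]
    ring
  rw [e1, tsum_shift (fun j => w q i B A j * (q ^ (A - j) * (1 - q ^ j))), W, ← tsum_mul_left,
    ← tsum_mul_left]
  rw [← Summable.tsum_add, ← Summable.tsum_add]
  · congr 1; ext j
    rw [w_F1 h0 h1, show w q i B A (j + 1) * (q ^ (A - (j + 1)) * (1 - q ^ (j + 1)))
      = q ^ (A - (j + 1)) * (w q i B A (j + 1) * (1 - q ^ (j + 1))) by ring, w_F2 h0 h1]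
    have : q ^ (A - (j + 1)) * q ^ (-(A - 1 - j)) = 1 := by
      rw [← zpow_add₀ h0]; ring_nf; simp
    linear_combination (q ^ i * (1 - q ^ B * q ^ (-j)) * w q i B (A - 1) j) * this
  · exact (w_summable q i B (A-1) _).mul_left _
  · exact (w_summable' q i B (A-1)).mul_left _
  · exact w_summable q i B A _
  · exact (Equiv.addRight (1:ℤ)).summable_iff.mpr
      (w_summable q i B A (fun j => (q ^ (A - j) * (1 - q ^ j))))

lemma W_rec2 {q : ℂ} (h0 : q ≠ 0) (h1 : ‖q‖ < 1) (i B D : ℤ) :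
    (1 - q ^ i) * (∑' j, w q i B D j * q ^ (-j)) =
      (1 - q ^ i * q ^ (-D)) * W q i B D + q ^ i * q ^ (-D) * W q i B (D - 1) := by
  have e1 : (1 - q ^ i) * (∑' j, w q i B D j * q ^ (-j)) - (1 - q ^ i * q ^ (-D)) * W q i B D
      = ∑' j, w q i B D j * (q ^ i * q ^ (-D) * (1 - q ^ (D - j)))
      + ∑' j, w q i B D j * (q ^ (-j) * (1 - q ^ j)) := by
    rw [W, ← tsum_mul_left, ← tsum_mul_left,
      ← ((w_summable q i B D _).mul_left _).tsum_sub ((w_summable' q i B D).mul_left _),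
      ← (w_summable q i B D _).tsum_add (w_summable q i B D _)]
    congr 1; ext j
    have a1 : q ^ (D - j) = q ^ D * q ^ (-j) := by rw [← zpow_add₀ h0]; rfl
    have a2 : q ^ (-D) * q ^ D = 1 := by rw [← zpow_add₀ h0]; simp
    have a3 : q ^ (-j) * q ^ j = 1 := by rw [← zpow_add₀ h0]; simp
    rw [a1]
    linear_combination (w q i B D j * q ^ i * q ^ (-j)) * a2 + w q i B D j * a3
  rw [← sub_eq_iff_eq_add', e1, tsum_shift (fun j => w q i B D j * (q ^ (-j) * (1 - q ^ j))), W,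
    ← tsum_mul_left, ← Summable.tsum_add]
  · congr 1; ext j
    rw [show w q i B D j * (q ^ i * q ^ (-D) * (1 - q ^ (D - j)))
      = q ^ i * q ^ (-D) * (w q i B D j * (1 - q ^ (D - j))) by ring, w_F1 h0 h1,
      show w q i B D (j + 1) * (q ^ (-(j + 1)) * (1 - q ^ (j + 1)))
      = q ^ (-(j + 1)) * (w q i B D (j + 1) * (1 - q ^ (j + 1))) by ring, w_F2 h0 h1]
    have : q ^ (-(j + 1)) * q ^ (-(D - 1 - j)) = q ^ (-D) := by
      rw [← zpow_add₀ h0]; ring_nf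
    linear_combination (q ^ i * (1 - q ^ B * q ^ (-j)) * w q i B (D - 1) j) * this
  · exact w_summable q i B D _
  · exact (Equiv.addRight (1:ℤ)).summable_iff.mpr
      (w_summable q i B D (fun j => (q ^ (-j) * (1 - q ^ j))))

lemma W_rec {q : ℂ} (h0 : q ≠ 0) (h1 : ‖q‖ < 1) (i B A : ℤ) :
    (1 - q ^ A) * W q i B A =
      (q ^ i + q ^ B - q ^ i * q ^ B * q ^ (-(A - 1))) * W q i B (A - 1)
        + q ^ i * q ^ B * q ^ (-(A - 1)) * W q i B (A - 1 - 1) := by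
  have r1 := W_rec1 h0 h1 i B A
  have r2 := W_rec2 h0 h1 i B (A - 1)
  linear_combination r1 + q ^ B * r2

lemma W_neg (q : ℂ) (i B : ℤ) {A : ℤ} (hA : A < 0) : W q i B A = 0 := by
  have : ∀ j, w q i B A j = 0 := by
    intro j
    rcases lt_or_ge j 0 with h | h
    · simp [w, zp_neg q h]
    · simp [w, zp_neg q (show A - j < 0 by omega)]
  simp [W, this]

lemma W_zero (q : ℂ) (i B : ℤ) : W q i B 0 = zp q B := by
  rw [W, tsum_eq_single 0]
  · simp [w, zp_zero]
  · intro j hj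
    rcases lt_or_gt_of_ne hj with h | h
    · simp [w, zp_neg q h]
    · simp [w, zp_neg q (show -j < 0 by omega)]

lemma W_symm {q : ℂ} (h0 : q ≠ 0) (h1 : ‖q‖ < 1) (i B A : ℤ) :
    zp q i * W q i B A = zp q B * W q B i A := by
  have main : ∀ n : ℕ, zp q i * W q i B n = zp q B * W q B i n ∧
      zp q i * W q i B ((n : ℤ) - 1) = zp q B * W q B i ((n : ℤ) - 1) := by
    intro n
    induction n with
    | zero =>
      constructor
      · simp only [Nat.cast_zero, W_zero]; ring
      · rw [W_neg _ _ _ (by simp), W_neg _ _ _ (by simp)]; simp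
    | succ n ih =>
      have hs : ((n + 1 : ℕ) : ℤ) - 1 = n := by push_cast; ring
      refine ⟨?_, by rw [hs]; exact ih.1⟩
      have r1 := W_rec h0 h1 i B ((n + 1 : ℕ) : ℤ)
      have r2 := W_rec h0 h1 B i ((n + 1 : ℕ) : ℤ)
      rw [hs] at r1 r2
      have hne := one_sub_zpow_ne h1 (n := ((n + 1 : ℕ) : ℤ)) (by positivity)
      apply mul_left_cancel₀ hne
      linear_combination zp q i * r1 - zp q B * r2
        + (q ^ i + q ^ B - q ^ i * q ^ B * q ^ (-(n : ℤ))) * ih.1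
        + q ^ i * q ^ B * q ^ (-(n : ℤ)) * ih.2
  rcases lt_or_ge A 0 with h | h
  · rw [W_neg _ _ _ h, W_neg _ _ _ h]; simp
  · lift A to ℕ using h
    exact (main A).1

/-- reindexing `(i, B, A, j) ↦ (i, j, k, l) = (i, j, A - j, B - j)` -/
def eS : (ℤ × ℤ × ℤ) × ℤ ≃ ℤ × ℤ × ℤ × ℤ where
  toFun v := (v.1.1, v.2, v.1.2.2 - v.2, v.1.2.1 - v.2)
  invFun v := ((v.1, v.2.1 + v.2.2.2, v.2.1 + v.2.2.1), v.2.1)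
  left_inv := by rintro ⟨⟨i, B, A⟩, j⟩; simp
  right_inv := by rintro ⟨i, j, k, l⟩; simp

lemma T_sum_W {q : ℂ} (h0 : q ≠ 0) (h1 : ‖q‖ < 1) (c b : ℤ) :
    ∑' v, T q c b 0 b v = ∑' v : ℤ × ℤ × ℤ,
      q ^ (v.1 ^ 2 + v.2.1 ^ 2 + v.2.2 ^ 2 - v.1 * v.2.1 - v.1 * v.2.2 - v.2.1 * v.2.2
        + c * v.1 + b * v.2.1) * (zp q v.1 * W q v.1 v.2.1 v.2.2) := by
  rw [← eS.tsum_eq]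
  refine (Summable.tsum_prod (eS.summable_iff.mpr (summable_T h0 h1 c b 0 b))).trans ?_
  congr 1; ext ⟨i, B, A⟩
  simp only [W]
  rw [← mul_assoc, ← tsum_mul_left]
  congr 1; ext j
  simp only [Function.comp_apply, T, eS, w, Equiv.coe_fn_mk]
  have : i ^ 2 + j ^ 2 + (A - j) ^ 2 + (B - j) ^ 2 - i * j - i * (A - j) - i * (B - j) + j * (A - j)
      + j * (B - j) + (c * i + b * j + 0 * (A - j) + b * (B - j)) =
      (i ^ 2 + B ^ 2 + A ^ 2 - i * B - i * A - B * A + c * i + b * B)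
      + ((A - j) * (B - j) + i * j) := by ring
  rw [this, zpow_add₀ h0]
  ring

lemma T_symm {q : ℂ} (h0 : q ≠ 0) (h1 : ‖q‖ < 1) :
    ∑' v, T q 0 1 0 1 v = ∑' v, T q 1 0 0 0 v := by
  rw [T_sum_W h0 h1, T_sum_W h0 h1]
  let e : ℤ × ℤ × ℤ ≃ ℤ × ℤ × ℤ :=
    ⟨fun v => (v.2.1, v.1, v.2.2), fun v => (v.2.1, v.1, v.2.2), fun _ => rfl, fun _ => rfl⟩
  rw [← e.tsum_eq]
  congr 1; ext ⟨i, B, A⟩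
  simp only [e, Equiv.coe_fn_mk]
  rw [W_symm h0 h1 B i A]
  congr 2
  ring

lemma three_S {q : ℂ} (h0 : q ≠ 0) (h1 : ‖q‖ < 1) :
    3 * ∑' v, T q 0 1 0 1 v = ∑' v, T q 1 (-1) (-1) 0 v := by
  have r1 := T_rec_j h0 h1 1 (-1) (-1) 0
  have r2 := T_rec_k h0 h1 1 0 (-1) 0
  norm_num at r1 r2
  rw [r1, r2, ← T_symm h0 h1, T_swap q 0 1 1 0]
  ring

noncomputable def us (q : ℂ) (m s j : ℤ) : ℂ := q ^ (j * (j + m) + s * j) * (zp q j * zp q (j + m))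

lemma us_summable {q : ℂ} (h0 : q ≠ 0) (h1 : ‖q‖ < 1) (m s : ℤ) : Summable (us q m s) := by
  obtain ⟨C, hC0, hC⟩ := zp_bdd h1
  have hq : 0 < ‖q‖ := norm_pos_iff.mpr h0
  refine Summable.of_norm_bounded ((summable_gauss hq h1 (m + s)).mul_left (C * C)) ?_
  intro j
  simp only [us, norm_mul, norm_zpow]
  rw [mul_comm, show j * (j + m) + s * j = j ^ 2 + (m + s) * j by ring]
  have e1 := hC j
  have e2 := hC (j + m)
  have := zpow_pos hq (j ^ 2 + (m + s) * j)
  gcongr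

lemma us_step1 {q : ℂ} (h0 : q ≠ 0) (h1 : ‖q‖ < 1) (m : ℤ) :
    ∑' j, us q m 0 j = ∑' j, us q (m - 1) 1 j + q ^ m * ∑' j, us q m 1 j := by
  rw [← tsum_mul_left, ← (us_summable h0 h1 _ _).tsum_add ((us_summable h0 h1 _ _).mul_left _)]
  congr 1; ext j
  have h := zp_rec h1 (j + m)
  simp only [us]
  rw [show j + (m - 1) = j + m - 1 by ring, ← h,
    show j * (j + m - 1) + 1 * j = j * (j + m) + 0 * j by ring,
    show j * (j + m) + 1 * j = (j * (j + m) + 0 * j) + j by ring, zpow_add₀ h0 _ j,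
    zpow_add₀ h0 j m]
  ring

lemma us_step2 {q : ℂ} (h0 : q ≠ 0) (h1 : ‖q‖ < 1) (m : ℤ) :
    ∑' j, us q m 0 j = ∑' j, us q m 1 j + q ^ (m + 1) * ∑' j, us q (m + 1) 1 j := by
  rw [← sub_eq_iff_eq_add', ← (us_summable h0 h1 _ _).tsum_sub (us_summable h0 h1 _ _),
    tsum_shift, ← tsum_mul_left]
  congr 1; ext j
  have h := zp_rec h1 (j + 1)
  rw [show j + 1 - 1 = j by ring] at h
  simp only [us]
  rw [← h, show j + (m + 1) = j + 1 + m by ring,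
    show (j + 1) * (j + 1 + m) + 1 * (j + 1) = ((j + 1) * (j + 1 + m) + 0 * (j + 1)) + (j + 1) by ring,
    zpow_add₀ h0 _ (j + 1),
    show (j + 1) * (j + 1 + m) + 0 * (j + 1) = (m + 1) + (j * (j + 1 + m) + 1 * j) by ring,
    zpow_add₀ h0 (m + 1)]
  ring

lemma us_const {q : ℂ} (h0 : q ≠ 0) (h1 : ‖q‖ < 1) (m : ℤ) :
    ∑' j, us q m 0 j = ∑' j, us q 0 0 j := by
  have step : ∀ m : ℤ, ∑' j, us q (m + 1) 0 j = ∑' j, us q m 0 j := by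
    intro m
    rw [us_step1 h0 h1 (m + 1), us_step2 h0 h1 m, add_sub_cancel_right]
  induction m using Int.induction_on with
  | zero => rfl
  | succ n ih => rw [step, ih]
  | pred n ih => rw [← ih, ← step (-(n : ℤ) - 1)]; congr 2; ext; simp

lemma us_sum {q : ℂ} (h0 : q ≠ 0) (h1 : ‖q‖ < 1) (m : ℤ) :
    ∑' j, us q m 0 j = (qPochInf q q)⁻¹ := by
  obtain ⟨C, hC0, hC⟩ := zp_bdd h1
  have hq : 0 < ‖q‖ := norm_pos_iff.mpr h0
  rw [us_const h0 h1]
  have lim : Tendsto (fun n : ℕ => ∑' j, us q n 0 j) atTop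
      (𝓝 (∑' j : ℤ, if j = 0 then (qPochInf q q)⁻¹ else 0)) := by
    apply tendsto_tsum_of_dominated_convergence
      (bound := fun j : ℤ => (C * C) * ‖q‖ ^ (j ^ 2 + 0 * j))
    · exact (summable_gauss hq h1 0).mul_left _
    · intro j
      rcases lt_trichotomy j 0 with h | h | h
      · simp [us, zp_neg q h, h.ne]
      · subst h
        simpa [us, zp_zero] using zp_tendsto h1
      · simp only [h.ne', if_false]
        apply squeeze_zero_norm (a := fun n : ℕ => (C * C) * ‖q‖ ^ n)
        · intro n
          simp only [us, norm_mul, norm_zpow]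
          rw [mul_comm]
          have e1 := hC j
          have e2 := hC (j + n)
          have e3 : ‖q‖ ^ (j * (j + n) + 0 * j) ≤ ‖q‖ ^ n := by
            rw [← zpow_natCast]
            apply zpow_le_zpow_right_of_le_one₀ hq h1.le
            nlinarith
          have := zpow_pos hq (j * (j + n) + 0 * j)
          gcongr
        · simpa using (tendsto_pow_atTop_nhds_zero_of_lt_one hq.le h1).const_mul (C * C)
    · refine Eventually.of_forall fun n j => ?_
      rcases lt_or_ge j 0 with h | h
      · simp only [us, zp_neg q h]
        simp only [zero_mul, mul_zero, norm_zero]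
        have := zpow_pos hq (j ^ 2 + 0)
        positivity
      · simp only [us, norm_mul, norm_zpow]
        rw [mul_comm]
        have e1 := hC j
        have e2 := hC (j + n)
        have e3 : ‖q‖ ^ (j * (j + n) + 0 * j) ≤ ‖q‖ ^ (j ^ 2 + 0 * j) := by
          apply zpow_le_zpow_right_of_le_one₀ hq h1.le
          nlinarith
        have := zpow_pos hq (j * (j + n) + 0 * j)
        gcongr
  simp only [us_const h0 h1] at lim
  rw [tsum_ite_eq] at lim
  exact tendsto_nhds_unique tendsto_const_nhds lim

/-- `((m,d),l),j ↦ (j+m+l, j, l+d, l)` -/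
def eT : ((ℤ × ℤ) × ℤ) × ℤ ≃ ℤ × ℤ × ℤ × ℤ where
  toFun v := (v.2 + (v.1.1.1 + v.1.2), v.2, v.1.2 + v.1.1.2, v.1.2)
  invFun v := (((v.1 - v.2.1 - v.2.2.2, v.2.2.1 - v.2.2.2), v.2.2.2), v.2.1)
  left_inv := by rintro ⟨⟨⟨m, d⟩, l⟩, j⟩; simp
  right_inv := by rintro ⟨i, j, k, l⟩; simp

lemma T_eT {q : ℂ} (h0 : q ≠ 0) (m d l j : ℤ) :
    T q 1 (-1) (-1) 0 (eT (((m, d), l), j)) =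
      q ^ (m ^ 2 - m * d + d ^ 2 + m - d) * us q d 0 l * us q (m + l) 0 j := by
  simp only [T, eT, us, Equiv.coe_fn_mk]
  have : (j + (m + l)) ^ 2 + j ^ 2 + (l + d) ^ 2 + l ^ 2 - (j + (m + l)) * j
      - (j + (m + l)) * (l + d) - (j + (m + l)) * l + j * (l + d) + j * l
      + (1 * (j + (m + l)) + -1 * j + -1 * (l + d) + 0 * l) =
      (m ^ 2 - m * d + d ^ 2 + m - d) + (l * (l + d) + 0 * l) + (j * (j + (m + l)) + 0 * j) := by
    ring
  rw [this, zpow_add₀ h0, zpow_add₀ h0]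
  ring

lemma T_theta {q : ℂ} (h0 : q ≠ 0) (h1 : ‖q‖ < 1) :
    (Summable fun v : ℤ × ℤ => q ^ (v.1 ^ 2 - v.1 * v.2 + v.2 ^ 2 + v.1 - v.2)) ∧
    ∑' v, T q 1 (-1) (-1) 0 v = ((qPochInf q q)⁻¹) ^ 2 *
      ∑' v : ℤ × ℤ, q ^ (v.1 ^ 2 - v.1 * v.2 + v.2 ^ 2 + v.1 - v.2) := by
  have hJ := pochInf_ne h1 h1
  have s1 : Summable (fun v => T q 1 (-1) (-1) 0 (eT v)) :=
    eT.summable_iff.mpr (summable_T h0 h1 1 (-1) (-1) 0)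
  have i1 : ∀ v : (ℤ × ℤ) × ℤ, ∑' j, T q 1 (-1) (-1) 0 (eT (v, j)) =
      q ^ (v.1.1 ^ 2 - v.1.1 * v.1.2 + v.1.2 ^ 2 + v.1.1 - v.1.2) * us q v.1.2 0 v.2
        * (qPochInf q q)⁻¹ := by
    rintro ⟨⟨m, d⟩, l⟩
    simp only [T_eT h0]
    rw [tsum_mul_left, us_sum h0 h1]
  have s2 := s1.prod
  simp only [i1] at s2
  have i2 : ∀ v : ℤ × ℤ, ∑' l, q ^ (v.1 ^ 2 - v.1 * v.2 + v.2 ^ 2 + v.1 - v.2) * us q v.2 0 l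
        * (qPochInf q q)⁻¹ = ((qPochInf q q)⁻¹) ^ 2 *
          q ^ (v.1 ^ 2 - v.1 * v.2 + v.2 ^ 2 + v.1 - v.2) := by
    rintro ⟨m, d⟩
    rw [tsum_mul_right, tsum_mul_left, us_sum h0 h1]
    ring
  have s3 := s2.prod
  simp only [i2] at s3
  refine ⟨(summable_mul_left_iff (pow_ne_zero 2 (inv_ne_zero hJ))).mp s3, ?_⟩
  rw [← eT.tsum_eq, s1.tsum_prod]
  simp only [i1]
  rw [s2.tsum_prod]
  simp only [i2]
  rw [tsum_mul_left]

lemma tsum_parity {g : ℤ → ℂ} (hg : Summable g) :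
    ∑' d, g d = ∑' e, g (2 * e) + ∑' e, g (2 * e + 1) := by
  have i0 : Function.Injective fun e : ℤ => 2 * e := fun a b h => by simpa using h
  have i1 : Function.Injective fun e : ℤ => 2 * e + 1 := fun a b h => by simpa using h
  have a0 := i0.hasSum_range_iff.mpr (hg.comp_injective i0).hasSum
  have a1 := i1.hasSum_range_iff.mpr (hg.comp_injective i1).hasSum
  refine (a0.add_isCompl ?_ a1).tsum_eq
  rw [isCompl_iff, Set.disjoint_iff_inter_eq_empty, codisjoint_iff]
  constructor
  · ext x; simp only [Set.mem_inter_iff, Set.mem_range, Set.mem_empty_iff_false, iff_false]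
    rintro ⟨⟨a, rfl⟩, b, hb⟩; omega
  · ext x; simp only [Set.sup_eq_union, Set.mem_union, Set.mem_range, Set.top_eq_univ, Set.mem_univ, iff_true]
    rcases Int.even_or_odd' x with ⟨k, h | h⟩
    · exact Or.inl ⟨k, h.symm⟩
    · exact Or.inr ⟨k, h.symm⟩

lemma theta_split {q : ℂ} (h0 : q ≠ 0) (h1 : ‖q‖ < 1) :
    ∑' v : ℤ × ℤ, q ^ (v.1 ^ 2 - v.1 * v.2 + v.2 ^ 2 + v.1 - v.2) =
      (∑' n : ℤ, q ^ (n ^ 2 + n)) * (∑' e : ℤ, q ^ (3 * e ^ 2 - e))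
      + (∑' n : ℤ, q ^ (n ^ 2)) * (∑' e : ℤ, q ^ (3 * e ^ 2 + 2 * e)) := by
  have s := (T_theta h0 h1).1
  have s' := (Equiv.prodComm ℤ ℤ).summable_iff.mpr s
  rw [← (Equiv.prodComm ℤ ℤ).tsum_eq]
  refine (Summable.tsum_prod s').trans ?_
  rw [tsum_parity s'.prod]
  congr 1
  · rw [← tsum_mul_left]
    congr 1; ext e
    rw [← (Equiv.addRight e).tsum_eq, ← tsum_mul_right]
    congr 1; ext m
    simp only [Function.comp_apply, Equiv.prodComm_apply, Prod.swap, Equiv.coe_addRight]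
    rw [← zpow_add₀ h0]; congr 1; ring
  · rw [← tsum_mul_left]
    congr 1; ext e
    rw [← (Equiv.addRight e).tsum_eq, ← tsum_mul_right]
    congr 1; ext m
    simp only [Function.comp_apply, Equiv.prodComm_apply, Prod.swap, Equiv.coe_addRight]
    rw [← zpow_add₀ h0]; congr 1; ring


/-- Euler summand -/
noncomputable def eu (s z : ℂ) (a : ℤ) : ℂ := s ^ (a ^ 2 - a) * z ^ a * zp (s ^ 2) a

lemma sq_lt {s : ℂ} (h1 : ‖s‖ < 1) : ‖s ^ 2‖ < 1 := by
  rw [norm_pow]; exact pow_lt_one₀ (norm_nonneg s) h1 (by norm_num)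

lemma eu_bound {s : ℂ} (h0 : s ≠ 0) {C : ℝ} (hC : ∀ n : ℤ, ‖zp (s ^ 2) n‖ ≤ C)
    {z : ℂ} (hz : ‖z‖ ≤ 1) (a : ℤ) : ‖eu s z a‖ ≤ C * ‖s‖ ^ (a ^ 2 + (-1) * a) := by
  have hq : 0 < ‖s‖ := norm_pos_iff.mpr h0
  have hC0 : 0 ≤ C := (norm_nonneg _).trans (hC 0)
  have p := zpow_pos hq (a ^ 2 + (-1) * a)
  rcases lt_or_ge a 0 with h | h
  · simp only [eu, zp_neg _ h, mul_zero, norm_zero]; positivity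
  · lift a to ℕ using h
    simp only [eu, norm_mul, norm_zpow, zpow_natCast, norm_pow]
    have e : ((a : ℤ) ^ 2 - a) = (a : ℤ) ^ 2 + (-1) * a := by ring
    have e1 : ‖z‖ ^ a ≤ 1 := pow_le_one₀ (norm_nonneg _) hz
    have e2 := hC a
    rw [e, mul_comm]
    calc ‖zp (s ^ 2) a‖ * (‖s‖ ^ ((a : ℤ) ^ 2 + (-1) * a) * ‖z‖ ^ a)
        ≤ C * (‖s‖ ^ ((a : ℤ) ^ 2 + (-1) * a) * 1) := by gcongr
      _ = _ := by ring

lemma eu_norm_summable {s z : ℂ} (h0 : s ≠ 0) (h1 : ‖s‖ < 1) (hz : ‖z‖ ≤ 1) :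
    Summable fun a => ‖eu s z a‖ := by
  obtain ⟨C, hC0, hC⟩ := zp_bdd (sq_lt h1)
  exact ((summable_gauss (norm_pos_iff.mpr h0) h1 (-1)).mul_left C).of_nonneg_of_le
    (fun _ => norm_nonneg _) (eu_bound h0 hC hz)

lemma eu_rec {s z : ℂ} (h0 : s ≠ 0) (h1 : ‖s‖ < 1) (hz0 : z ≠ 0) (hz : ‖z‖ ≤ 1) :
    ∑' a, eu s z a = (1 + z) * ∑' a, eu s (s ^ 2 * z) a := by
  have hz2 : ‖s ^ 2 * z‖ ≤ 1 := by
    rw [norm_mul]; exact mul_le_one₀ (sq_lt h1).le (norm_nonneg _) hz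
  have sz := (eu_norm_summable h0 h1 hz).of_norm
  have sz2 := (eu_norm_summable h0 h1 hz2).of_norm
  have e : ∑' a, (eu s z a - eu s (s ^ 2 * z) a) = ∑' a, z * eu s (s ^ 2 * z) a := by
    rw [tsum_shift]
    congr 1; ext a
    have r := zp_rec (sq_lt h1) (a + 1)
    rw [add_sub_cancel_right] at r
    simp only [eu]
    rw [← r, mul_zpow, mul_zpow, zpow_add_one₀ hz0 a, ← zpow_natCast s 2, ← zpow_mul, ← zpow_mul]
    have e1 : (a + 1) ^ 2 - (a + 1) = (a ^ 2 - a) + ((2 : ℕ) : ℤ) * a := by push_cast; ring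
    rw [e1, zpow_add₀ h0]
    ring
  rw [sz.tsum_sub sz2, tsum_mul_left] at e
  linear_combination e

lemma eu_iter {s z : ℂ} (h0 : s ≠ 0) (h1 : ‖s‖ < 1) (hz0 : z ≠ 0) (hz : ‖z‖ ≤ 1) (n : ℕ) :
    ∑' a, eu s z a = qPoch (-z) (s ^ 2) n * ∑' a, eu s ((s ^ 2) ^ n * z) a := by
  induction n with
  | zero => simp [qPoch]
  | succ n ih =>
    have hz2 : ‖(s ^ 2) ^ n * z‖ ≤ 1 := by
      rw [norm_mul, norm_pow]
      exact mul_le_one₀ (pow_le_one₀ (norm_nonneg _) (sq_lt h1).le) (norm_nonneg _) hz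
    rw [ih, eu_rec h0 h1 (mul_ne_zero (pow_ne_zero _ (pow_ne_zero _ h0)) hz0) hz2]
    simp only [qPoch, Finset.prod_range_succ, pow_succ _ n, ← mul_assoc]
    rw [mul_comm ((s ^ 2) ^ n) (s ^ 2)]
    ring

lemma euler {s z : ℂ} (h0 : s ≠ 0) (h1 : ‖s‖ < 1) (hz0 : z ≠ 0) (hz : ‖z‖ ≤ 1) :
    ∑' a, eu s z a = qPochInf (-z) (s ^ 2) := by
  obtain ⟨C, hC0, hC⟩ := zp_bdd (sq_lt h1)
  have hq : 0 < ‖s‖ := norm_pos_iff.mpr h0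
  have lim : Tendsto (fun n : ℕ => ∑' a, eu s ((s ^ 2) ^ n * z) a) atTop
      (𝓝 (∑' a : ℤ, if a = 0 then (1 : ℂ) else 0)) := by
    apply tendsto_tsum_of_dominated_convergence
      (bound := fun a : ℤ => C * ‖s‖ ^ (a ^ 2 + (-1) * a))
    · exact (summable_gauss hq h1 (-1)).mul_left _
    · intro a
      rcases lt_trichotomy a 0 with h | h | h
      · simp [eu, zp_neg _ h, h.ne]
      · subst h
        simp [eu, zp_zero]
      · simp only [h.ne', if_false]
        obtain ⟨k, rfl⟩ : ∃ k : ℕ, a = ((k + 1 : ℕ) : ℤ) := ⟨(a - 1).toNat, by omega⟩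
        simp only [eu, zpow_natCast]
        have t : Tendsto (fun n : ℕ => (s ^ 2) ^ n * z) atTop (𝓝 (0 * z)) :=
          (tendsto_pow_atTop_nhds_zero_of_norm_lt_one (sq_lt h1)).mul_const z
        have t2 := ((t.pow (k + 1)).const_mul (s ^ (((k + 1 : ℕ) : ℤ) ^ 2 - ((k + 1 : ℕ) : ℤ)))).mul_const
          (zp (s ^ 2) ((k + 1 : ℕ) : ℤ))
        simpa using t2
    · refine Eventually.of_forall fun n a => eu_bound h0 hC ?_ a
      rw [norm_mul, norm_pow]
      exact mul_le_one₀ (pow_le_one₀ (norm_nonneg _) (sq_lt h1).le) (norm_nonneg _) hz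
  rw [tsum_ite_eq] at lim
  have l2 := (poch_tendsto (-z) (sq_lt h1)).mul lim
  simp only [← eu_iter h0 h1 hz0 hz, mul_one] at l2
  exact tendsto_nhds_unique tendsto_const_nhds l2

def eM : ℤ × ℤ ≃ ℤ × ℤ where
  toFun v := (v.2 + v.1, v.2)
  invFun v := (v.1 - v.2, v.2)
  left_inv := by rintro ⟨m, d⟩; simp
  right_inv := by rintro ⟨i, j⟩; simp

lemma jtp {s z : ℂ} (h0 : s ≠ 0) (h1 : ‖s‖ < 1) (hz0 : z ≠ 0) (hz : ‖z‖ ≤ 1)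
    (hz' : ‖s ^ 2 / z‖ ≤ 1) :
    ∑' m : ℤ, s ^ (m ^ 2 - m) * z ^ m = qPochInf (-z) (s ^ 2) * qPochInf (-(s ^ 2 / z)) (s ^ 2)
      * qPochInf (s ^ 2) (s ^ 2) := by
  have hJ := pochInf_ne (sq_lt h1) (sq_lt h1)
  have hs2 : s ^ 2 ≠ 0 := pow_ne_zero 2 h0
  have n1 := eu_norm_summable h0 h1 hz
  have n2 := eu_norm_summable h0 h1 hz'
  have sp := summable_mul_of_summable_norm n1 n2
  have sp' : Summable fun v => eu s z (eM v).1 * eu s (s ^ 2 / z) (eM v).2 :=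
    eM.summable_iff.mpr sp
  rw [← euler h0 h1 hz0 hz, ← euler h0 h1 (div_ne_zero hs2 hz0) hz',
    tsum_mul_tsum_of_summable_norm n1 n2, ← eM.tsum_eq]
  rw [Summable.tsum_prod sp', ← tsum_mul_right]
  congr 1; ext m
  have : ∀ b, eu s z (eM (m, b)).1 * eu s (s ^ 2 / z) (eM (m, b)).2
      = s ^ (m ^ 2 - m) * z ^ m * us (s ^ 2) m 0 b := by
    intro b
    simp only [eM, Equiv.coe_fn_mk, eu, us]
    rw [div_zpow, zpow_add₀ hz0, ← zpow_natCast s 2, ← zpow_mul, ← zpow_mul]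
    have e : s ^ ((b + m) ^ 2 - (b + m)) * s ^ (b ^ 2 - b) * s ^ (((2 : ℕ) : ℤ) * b)
       = s ^ (m ^ 2 - m) * s ^ (((2 : ℕ) : ℤ) * (b * (b + m) + 0 * b)) := by
      rw [← zpow_add₀ h0, ← zpow_add₀ h0, ← zpow_add₀ h0]; congr 1; push_cast; ring
    have hzb := zpow_ne_zero b hz0
    field_simp
    linear_combination (zp (s ^ ((2:ℕ):ℤ)) (b + m) * zp (s ^ ((2:ℕ):ℤ)) b) * e
  simp only [this]
  rw [tsum_mul_left, us_sum hs2 (sq_lt h1)]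
  field_simp


lemma pw {p : ℂ} (h1 : ‖p‖ < 1) {n : ℕ} (hn : n ≠ 0) : ‖p ^ n‖ < 1 := by
  rw [norm_pow]; exact pow_lt_one₀ (norm_nonneg p) h1 hn

lemma dis2 {p : ℂ} (a : ℂ) (h1 : ‖p‖ < 1) :
    qPochInf a p = qPochInf a (p ^ 2) * qPochInf (a * p) (p ^ 2) := by
  have t := (poch_tendsto a h1).comp (tendsto_id.nsmul_atTop (n := 2) (by norm_num))
  refine tendsto_nhds_unique t ?_
  have t2 := (poch_tendsto a (pw h1 two_ne_zero)).mul (poch_tendsto (a * p) (pw h1 two_ne_zero))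
  refine t2.congr fun n => ?_
  simp only [Function.comp_apply, id, smul_eq_mul]
  induction n with
  | zero => simp [qPoch]
  | succ n ih =>
    rw [Nat.mul_succ]
    simp only [qPoch, Finset.prod_range_succ] at ih ⊢
    rw [← ih]
    ring

lemma dis3 {p : ℂ} (a : ℂ) (h1 : ‖p‖ < 1) :
    qPochInf a p = qPochInf a (p ^ 3) * qPochInf (a * p) (p ^ 3) * qPochInf (a * p ^ 2) (p ^ 3) := by
  have t := (poch_tendsto a h1).comp (tendsto_id.nsmul_atTop (n := 3) (by norm_num))
  refine tendsto_nhds_unique t ?_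
  have t2 := ((poch_tendsto a (pw h1 three_ne_zero)).mul
    (poch_tendsto (a * p) (pw h1 three_ne_zero))).mul
    (poch_tendsto (a * p ^ 2) (pw h1 three_ne_zero))
  refine t2.congr fun n => ?_
  simp only [Function.comp_apply, id, smul_eq_mul]
  induction n with
  | zero => simp [qPoch]
  | succ n ih =>
    rw [Nat.mul_succ]
    simp only [qPoch, Finset.prod_range_succ] at ih ⊢
    rw [← ih]
    ring

lemma negp {p : ℂ} (a : ℂ) (h1 : ‖p‖ < 1) :
    qPochInf a p * qPochInf (-a) p = qPochInf (a ^ 2) (p ^ 2) := by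
  refine tendsto_nhds_unique ((poch_tendsto a h1).mul (poch_tendsto (-a) h1)) ?_
  refine (poch_tendsto (a ^ 2) (pw h1 two_ne_zero)).congr fun n => ?_
  simp only [qPoch]
  rw [← Finset.prod_mul_distrib]
  refine Finset.prod_congr rfl fun k _ => ?_
  ring

lemma poch_first {p : ℂ} (a : ℂ) (h1 : ‖p‖ < 1) :
    qPochInf a p = (1 - a) * qPochInf (a * p) p := by
  have t := (poch_tendsto a h1).comp (tendsto_add_atTop_nat 1)
  refine tendsto_nhds_unique t ?_
  refine ((poch_tendsto (a * p) h1).const_mul (1 - a)).congr fun n => ?_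
  simp only [Function.comp_apply, qPoch]
  rw [Finset.prod_range_succ']
  rw [mul_comm]
  congr 1
  · refine Finset.prod_congr rfl fun k _ => ?_
    ring
  · simp

lemma th1 {q : ℂ} (h0 : q ≠ 0) (h1 : ‖q‖ < 1) :
    ∑' n : ℤ, q ^ (n ^ 2) = qPochInf (-q) (q ^ 2) ^ 2 * qPochInf (q ^ 2) (q ^ 2) := by
  have e : q ^ 2 / q = q := by field_simp
  have h := jtp h0 h1 h0 h1.le (by rw [e]; exact h1.le)
  rw [e] at h
  rw [sq (qPochInf (-q) (q ^ 2)), ← h]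
  congr 1; ext n
  rw [← zpow_add₀ h0]; congr 1; ring

lemma th2 {q : ℂ} (h0 : q ≠ 0) (h1 : ‖q‖ < 1) :
    ∑' n : ℤ, q ^ (n ^ 2 + n) = 2 * qPochInf (-q ^ 2) (q ^ 2) ^ 2 * qPochInf (q ^ 2) (q ^ 2) := by
  have h := jtp h0 h1 one_ne_zero (by simp) (by rw [div_one]; exact (sq_lt h1).le)
  rw [poch_first (-1) (sq_lt h1)] at h
  rw [← (Equiv.neg ℤ).tsum_eq]
  have e : ∀ n : ℤ, q ^ (((Equiv.neg ℤ) n) ^ 2 + (Equiv.neg ℤ) n) = q ^ (n ^ 2 - n) * 1 ^ n := by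
    intro n
    simp [sub_eq_add_neg]
  simp only [e]
  rw [h, div_one, neg_one_mul]
  ring

lemma th3 {q : ℂ} (h0 : q ≠ 0) (h1 : ‖q‖ < 1) :
    ∑' n : ℤ, q ^ (3 * n ^ 2 - n) =
      qPochInf (-q ^ 2) (q ^ 6) * qPochInf (-q ^ 4) (q ^ 6) * qPochInf (q ^ 6) (q ^ 6) := by
  have e : (q ^ 3) ^ 2 / q ^ 2 = q ^ 4 := by field_simp
  have h := jtp (pow_ne_zero 3 h0) (pw h1 three_ne_zero) (pow_ne_zero 2 h0)
    (pw h1 two_ne_zero).le (by rw [e]; exact (pw h1 (by norm_num)).le)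
  rw [e, ← pow_mul] at h
  norm_num at h
  rw [← h]
  congr 1; ext n
  rw [← zpow_natCast q 3, ← zpow_natCast q 2, ← zpow_mul, ← zpow_mul, ← zpow_add₀ h0]
  congr 1; push_cast; ring

lemma th4 {q : ℂ} (h0 : q ≠ 0) (h1 : ‖q‖ < 1) :
    ∑' n : ℤ, q ^ (3 * n ^ 2 + 2 * n) =
      qPochInf (-q ^ 5) (q ^ 6) * qPochInf (-q) (q ^ 6) * qPochInf (q ^ 6) (q ^ 6) := by
  have e : (q ^ 3) ^ 2 / q ^ 5 = q := by field_simp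
  have h := jtp (pow_ne_zero 3 h0) (pw h1 three_ne_zero) (pow_ne_zero 5 h0)
    (pw h1 (by norm_num)).le (by rw [e]; exact h1.le)
  rw [e, ← pow_mul] at h
  norm_num at h
  rw [← h]
  congr 1; ext n
  rw [← zpow_natCast q 3, ← zpow_natCast q 5, ← zpow_mul, ← zpow_mul, ← zpow_add₀ h0]
  congr 1; push_cast; ring

lemma J_ne {q : ℂ} (h1 : ‖q‖ < 1) {m : ℕ} (hm : m ≠ 0) : J q m ≠ 0 :=
  pochInf_ne (pw h1 hm) (pw h1 hm)

lemma Jneg {q : ℂ} (h1 : ‖q‖ < 1) {m : ℕ} (hm : m ≠ 0) :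
    qPochInf (-q ^ m) (q ^ m) = J q (m * 2) / J q m := by
  rw [eq_div_iff (J_ne h1 hm), mul_comm]
  have := negp (q ^ m) (pw h1 hm)
  rw [← pow_mul] at this
  exact this

lemma nm1 {q : ℂ} (h1 : ‖q‖ < 1) : qPochInf (-q) (q ^ 2) = J q 2 ^ 2 / (J q 1 * J q 4) := by
  have n1 := J_ne h1 (m := 1) (by norm_num)
  have n2 := J_ne h1 (m := 2) (by norm_num)
  have n4 := J_ne h1 (m := 4) (by norm_num)
  have a := Jneg h1 (m := 1) (by norm_num)
  have b := Jneg h1 (m := 2) (by norm_num)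
  have c := dis2 (-q) h1
  have e : -q * q = -q ^ 2 := by ring
  rw [e, b] at c
  simp only [pow_one, one_mul] at a
  rw [a] at c
  norm_num at c
  field_simp at c ⊢
  linear_combination -c

lemma sum1 {q : ℂ} (h0 : q ≠ 0) (h1 : ‖q‖ < 1) :
    ∑' n : ℤ, q ^ (n ^ 2) = J q 2 ^ 5 / (J q 1 ^ 2 * J q 4 ^ 2) := by
  rw [th1 h0 h1, nm1 h1]
  change _ * J q 2 = _
  ring

lemma sum2 {q : ℂ} (h0 : q ≠ 0) (h1 : ‖q‖ < 1) :
    ∑' n : ℤ, q ^ (n ^ 2 + n) = 2 * J q 4 ^ 2 / J q 2 := by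
  have n2 := J_ne h1 (m := 2) (by norm_num)
  rw [th2 h0 h1, Jneg h1 two_ne_zero]
  change _ * J q 2 = _
  norm_num
  field_simp

lemma sum3 {q : ℂ} (h0 : q ≠ 0) (h1 : ‖q‖ < 1) :
    ∑' n : ℤ, q ^ (3 * n ^ 2 - n) = J q 6 ^ 2 * J q 4 / (J q 12 * J q 2) := by
  have n2 := J_ne h1 (m := 2) (by norm_num)
  have n6 := J_ne h1 (m := 6) (by norm_num)
  have n12 := J_ne h1 (m := 12) (by norm_num)
  have c := dis3 (-q ^ 2) (pw h1 two_ne_zero)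
  have e : -q ^ 2 * q ^ 2 = -q ^ 4 := by ring
  have e' : -q ^ 2 * (q ^ 2) ^ 2 = -q ^ 6 := by ring
  rw [e, e', ← pow_mul, Jneg h1 two_ne_zero] at c
  norm_num at c
  rw [Jneg h1 (by norm_num)] at c
  norm_num at c
  rw [th3 h0 h1]
  change _ * J q 6 = _
  field_simp at c ⊢
  linear_combination -c

lemma sum4 {q : ℂ} (h0 : q ≠ 0) (h1 : ‖q‖ < 1) :
    ∑' n : ℤ, q ^ (3 * n ^ 2 + 2 * n) = J q 6 ^ 2 * Jam q 2 12 / (J q 12 * Jam q 1 6) := by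
  have n6 := J_ne h1 (m := 6) (by norm_num)
  have n12 := J_ne h1 (m := 12) (by norm_num)
  have h6 : ‖q ^ 6‖ < 1 := pw h1 (by norm_num)
  have m1 : qPochInf q (q ^ 6) ≠ 0 := pochInf_ne h6 h1
  have m5 : qPochInf (q ^ 5) (q ^ 6) ≠ 0 := pochInf_ne h6 (pw h1 (by norm_num))
  have a := negp q h6
  have b := negp (q ^ 5) h6
  rw [← pow_mul] at a b
  rw [← pow_mul] at b
  norm_num at a b
  have e1 : Jam q 1 6 = qPochInf q (q ^ 6) * qPochInf (q ^ 5) (q ^ 6) * J q 6 := by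
    simp [Jam, J]
  have e2 : Jam q 2 12 = qPochInf (q ^ 2) (q ^ 12) * qPochInf (q ^ 10) (q ^ 12) * J q 12 := by
    simp [Jam, J]
  rw [th4 h0 h1, e1, e2, ← a, ← b]
  change _ * J q 6 = _
  field_simp

lemma S_conv {q : ℂ} :
    (∑' p : ℕ × ℕ × ℕ × ℕ,
      (fun (i j k l : ℕ) =>
        q ^ (((i:ℤ)^2 + (j:ℤ)^2 + (k:ℤ)^2 + (l:ℤ)^2 - (i:ℤ)*(j:ℤ) - (i:ℤ)*(k:ℤ) - (i:ℤ)*(l:ℤ) + (j:ℤ)*(k:ℤ) + (j:ℤ)*(l:ℤ) + (j:ℤ) + (l:ℤ)) : ℤ) /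
          (qPoch (q ^ 1) (q ^ 1) i * qPoch (q ^ 1) (q ^ 1) j * qPoch (q ^ 1) (q ^ 1) k * qPoch (q ^ 1) (q ^ 1) l))
        p.1 p.2.1 p.2.2.1 p.2.2.2) = ∑' v, T q 0 1 0 1 v := by
  let g : ℕ × ℕ × ℕ × ℕ → ℤ × ℤ × ℤ × ℤ := fun p => (p.1, p.2.1, p.2.2.1, p.2.2.2)
  have hg : Function.Injective g := by
    rintro ⟨a, b, c, d⟩ ⟨a', b', c', d'⟩ h
    simpa [g] using h
  have hs : Function.support (T q 0 1 0 1) ⊆ Set.range g := by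
    rintro ⟨i, j, k, l⟩ h
    rw [Function.mem_support] at h
    have hi : 0 ≤ i := by
      by_contra hh; apply h; simp [T, zp_neg q (not_le.mp hh)]
    have hj : 0 ≤ j := by
      by_contra hh; apply h; simp [T, zp_neg q (not_le.mp hh)]
    have hk : 0 ≤ k := by
      by_contra hh; apply h; simp [T, zp_neg q (not_le.mp hh)]
    have hl : 0 ≤ l := by
      by_contra hh; apply h; simp [T, zp_neg q (not_le.mp hh)]
    lift i to ℕ using hi
    lift j to ℕ using hj
    lift k to ℕ using hk
    lift l to ℕ using hl
    exact ⟨(i, j, k, l), rfl⟩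
  rw [← hg.tsum_eq hs]
  congr 1; ext ⟨i, j, k, l⟩
  simp only [T, g, zp_nat, pow_one, div_eq_mul_inv, mul_inv]
  congr 2
  ring

lemma main {q : ℂ} (h0 : q ≠ 0) (h1 : ‖q‖ < 1) :
    ∑' v, T q 0 1 0 1 v = (1/3) * ((J q 6)^2 / ((J q 1)^2 * J q 12)) *
      ((J q 2)^5 * Jam q 2 12 / ((J q 1)^2 * (J q 4)^2 * Jam q 1 6)
        + 2 * (J q 4)^3 / (J q 2)^2) := by
  have h := three_S h0 h1
  rw [(T_theta h0 h1).2, theta_split h0 h1, sum1 h0 h1, sum2 h0 h1, sum3 h0 h1, sum4 h0 h1] at h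
  have e : qPochInf q q = J q 1 := by simp [J]
  rw [e] at h
  have h' : ∑' v, T q 0 1 0 1 v = (1/3) * (3 * ∑' v, T q 0 1 0 1 v) := by ring
  rw [h', h]
  simp only [div_eq_mul_inv, mul_inv]
  ring

end NS

theorem stmt_11 (q : ℂ) (h0 : 0 < ‖q‖) (h1 : ‖q‖ < 1) :
    (∑' p : ℕ × ℕ × ℕ × ℕ,
      (fun (i j k l : ℕ) =>
        q ^ (((i:ℤ)^2 + (j:ℤ)^2 + (k:ℤ)^2 + (l:ℤ)^2 - (i:ℤ)*(j:ℤ) - (i:ℤ)*(k:ℤ) - (i:ℤ)*(l:ℤ) + (j:ℤ)*(k:ℤ) + (j:ℤ)*(l:ℤ) + (j:ℤ) + (l:ℤ)) : ℤ) /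
          (qPoch (q ^ 1) (q ^ 1) i * qPoch (q ^ 1) (q ^ 1) j * qPoch (q ^ 1) (q ^ 1) k * qPoch (q ^ 1) (q ^ 1) l))
        p.1 p.2.1 p.2.2.1 p.2.2.2)
    = (1/3) * ((J q 6)^2 / ((J q 1)^2 * J q 12)) *
      ((J q 2)^5 * Jam q 2 12 / ((J q 1)^2 * (J q 4)^2 * Jam q 1 6)
        + 2 * (J q 4)^3 / (J q 2)^2) := by
  rw [NS.S_conv]
  exact NS.main (norm_pos_iff.mp h0) h1
end

section
/- For every complex number q with 0 < |q| < 1, one has ∑_{i,j,k,l ≥ 0} q^{i²+j²+k²+l²−ij−ik−il+jk+jl+i−k} / ((q;q)_i (q;q)_j (q;q)_k (q;q)_l) = (2/3) · (J_6² / (J_1² J_12)) · ( J_2⁵ J_{2,12} / (J_1² J_4² J_{1,6}) + 2 J_4³ / J_2² ). -/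
open scoped BigOperators

open Filter Topology

namespace NS

/-- `g p n = p^(n(n+1)/2)`. -/
noncomputable def g (p : ℂ) (n : ℤ) : ℂ := p ^ (n * (n + 1) / 2)

/-- reciprocal of `(p;p)_n`, extended by zero. -/
noncomputable def u (p : ℂ) (n : ℤ) : ℂ := if 0 ≤ n then (qPoch p p n.toNat)⁻¹ else 0

lemma tri (n : ℤ) : 2 * (n * (n + 1) / 2) = n * (n + 1) :=
  Int.mul_ediv_cancel' (Int.even_mul_succ_self n).two_dvd

lemma g_refl (p : ℂ) (n : ℤ) : g p (-n - 1) = g p n := by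
  unfold g; congr 2; ring

lemma g_refl' (p : ℂ) (m n : ℤ) (h : m + n = -1) : g p m = g p n := by
  rw [← g_refl p n]; congr 1; omega

lemma g_ne {p : ℂ} (hp0 : p ≠ 0) (n : ℤ) : g p n ≠ 0 := zpow_ne_zero _ hp0

lemma g_succ {p : ℂ} (hp0 : p ≠ 0) (n : ℤ) : g p (n + 1) = p ^ (n + 1) * g p n := by
  unfold g
  rw [← zpow_add₀ hp0]
  congr 1
  have h1 := tri n
  have h2 := tri (n + 1)
  linarith

lemma g_pred {p : ℂ} (hp0 : p ≠ 0) (n : ℤ) : p ^ n * g p (n - 1) = g p n := by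
  have := g_succ hp0 (n - 1)
  simp only [sub_add_cancel] at this
  exact this.symm

lemma qPoch_ne {p : ℂ} (hp : ‖p‖ < 1) (n : ℕ) : qPoch p p n ≠ 0 := by
  unfold qPoch
  rw [Finset.prod_ne_zero_iff]
  intro k _ h
  have : p ^ (k + 1) = 1 := by rw [pow_succ']; linear_combination -h
  have h2 : ‖p‖ ^ (k + 1) = 1 := by rw [← norm_pow, this, norm_one]
  have := pow_lt_one₀ (norm_nonneg p) hp (Nat.succ_ne_zero k)
  simp only [Nat.succ_eq_add_one] at this
  linarith

lemma u_neg (p : ℂ) {n : ℤ} (h : n < 0) : u p n = 0 := by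
  unfold u; rw [if_neg (by omega)]

lemma u_nat (p : ℂ) (n : ℕ) : u p n = (qPoch p p n)⁻¹ := by
  unfold u; rw [if_pos (by omega)]; simp

lemma u_rec {p : ℂ} (hp : ‖p‖ < 1) (n : ℤ) : u p (n - 1) = (1 - p ^ n) * u p n := by
  rcases lt_trichotomy n 0 with h | h | h
  · rw [u_neg p h, u_neg p (by omega)]; simp
  · subst h; rw [u_neg p (by omega)]; simp
  · obtain ⟨k, rfl⟩ : ∃ k : ℕ, n = (k : ℤ) + 1 := ⟨(n - 1).toNat, by omega⟩
    have e : ((k : ℤ) + 1) = ((k + 1 : ℕ) : ℤ) := by push_cast; ring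
    rw [add_sub_cancel_right, e, u_nat, u_nat, zpow_natCast]
    have h1 := qPoch_ne hp k
    have h2 := qPoch_ne hp (k + 1)
    have h3 : qPoch p p (k + 1) = qPoch p p k * (1 - p ^ (k + 1)) := by
      unfold qPoch; rw [Finset.prod_range_succ, pow_succ']
    rw [h3] at h2 ⊢
    have h4 := right_ne_zero_of_mul h2
    field_simp

lemma summ_geom {p : ℂ} (hp : ‖p‖ < 1) (a : ℂ) : Summable fun n : ℕ => ‖-(a * p ^ n)‖ := by
  simp only [norm_neg, norm_mul, norm_pow]
  exact (summable_geometric_of_lt_one (norm_nonneg _) hp).mul_left _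

lemma mult {p : ℂ} (hp : ‖p‖ < 1) (a : ℂ) : Multipliable fun n : ℕ => 1 - a * p ^ n := by
  simpa [sub_eq_add_neg] using multipliable_one_add_of_summable (summ_geom hp a)

lemma qPoch_tendsto {p : ℂ} (hp : ‖p‖ < 1) (a : ℂ) :
    Tendsto (fun n => qPoch a p n) atTop (𝓝 (qPochInf a p)) :=
  (mult hp a).tendsto_prod_tprod_nat

lemma qInf_ne' {p : ℂ} (hp : ‖p‖ < 1) {a : ℂ} (h : ∀ n : ℕ, 1 - a * p ^ n ≠ 0) :
    qPochInf a p ≠ 0 := by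
  have := tprod_one_add_ne_zero_of_summable (f := fun n : ℕ => -(a * p ^ n))
    (by simpa [sub_eq_add_neg] using h) (summ_geom hp a)
  simpa [qPochInf, sub_eq_add_neg] using this

lemma qInf_ne {p : ℂ} (hp : ‖p‖ < 1) {a : ℂ} (ha : ‖a‖ < 1) : qPochInf a p ≠ 0 := by
  apply qInf_ne' hp
  intro n h
  have h1 : a * p ^ n = 1 := by linear_combination -h
  have h2 : ‖a‖ * ‖p‖ ^ n = 1 := by rw [← norm_pow, ← norm_mul, h1, norm_one]
  have := pow_le_one₀ (n := n) (norm_nonneg p) hp.le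
  nlinarith [norm_nonneg a, pow_nonneg (norm_nonneg p) n]

lemma u_tendsto {p : ℂ} (hp : ‖p‖ < 1) :
    Tendsto (fun n : ℕ => u p n) atTop (𝓝 (qPochInf p p)⁻¹) := by
  simp only [u_nat]
  exact (qPoch_tendsto hp p).inv₀ (qInf_ne hp hp)

lemma u_bdd {p : ℂ} (hp : ‖p‖ < 1) : ∃ C : ℝ, 0 < C ∧ ∀ n, ‖u p n‖ ≤ C := by
  obtain ⟨C, hC⟩ := (u_tendsto hp).norm.bddAbove_range
  refine ⟨max C 1, by positivity, fun n => ?_⟩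
  rcases lt_or_ge n 0 with h | h
  · rw [u_neg p h]; simp
  · obtain ⟨k, rfl⟩ := Int.eq_ofNat_of_zero_le h
    exact le_max_of_le_left (hC ⟨k, rfl⟩)


lemma summ_g_pow {p : ℂ} (hp0 : p ≠ 0) (hp : ‖p‖ < 1) {z : ℂ} (hz : z ≠ 0) :
    Summable fun n : ℤ => g p n * z ^ n := by
  have key : ∀ w : ℂ, w ≠ 0 → Summable fun n : ℕ => g p n * w ^ n := by
    intro w hw
    apply summable_of_ratio_test_tendsto_lt_one (l := 0) one_pos
    · exact Eventually.of_forall fun n => mul_ne_zero (g_ne hp0 _) (pow_ne_zero _ hw)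
    · have : ∀ n : ℕ, ‖g p ((n + 1 : ℕ) : ℤ) * w ^ (n + 1)‖ / ‖g p n * w ^ n‖
          = ‖p‖ ^ n * (‖p‖ * ‖w‖) := by
        intro n
        have h1 : ‖g p n‖ ≠ 0 := norm_ne_zero_iff.2 (g_ne hp0 _)
        have h2 : ‖w‖ ≠ 0 := norm_ne_zero_iff.2 hw
        push_cast
        rw [g_succ hp0, show ((n : ℤ) + 1) = ((n + 1 : ℕ) : ℤ) by push_cast; ring, zpow_natCast]
        simp only [norm_mul, norm_pow]
        field_simp
        ring
      simp only [this]
      simpa using (tendsto_pow_atTop_nhds_zero_of_lt_one (norm_nonneg p) hp).mul_const (‖p‖ * ‖w‖)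
  apply Summable.of_nat_of_neg_add_one
  · simpa using key z hz
  · have := (key z⁻¹ (inv_ne_zero hz)).mul_right z⁻¹
    refine this.congr fun n => ?_
    rw [g_refl' p (-((n : ℤ) + 1)) n (by ring), zpow_neg, inv_pow, mul_assoc]
    congr 1
    rw [zpow_add₀ hz, zpow_natCast, zpow_one, mul_inv]

lemma summ_g {p : ℂ} (hp0 : p ≠ 0) (hp : ‖p‖ < 1) : Summable (g p) := by
  simpa using summ_g_pow hp0 hp one_ne_zero

lemma abs_le_pow (n : ℤ) : |(n : ℝ)| ≤ (2 : ℝ) ^ n + (2 : ℝ) ^ (-n) := by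
  have key : ∀ k : ℕ, (k : ℝ) ≤ (2 : ℝ) ^ k := fun k => by exact_mod_cast (Nat.lt_two_pow_self).le
  obtain ⟨k, rfl | rfl⟩ := n.eq_nat_or_neg
  · have := key k
    have h2 : (0:ℝ) < (2:ℝ) ^ (-(k:ℤ)) := by positivity
    simp only [Int.cast_natCast, Nat.abs_cast, zpow_natCast]
    linarith
  · have := key k
    have h2 : (0:ℝ) < (2:ℝ) ^ (-(k:ℤ)) := by positivity
    simp only [Int.cast_neg, Int.cast_natCast, abs_neg, Nat.abs_cast, neg_neg, zpow_natCast]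
    linarith

lemma summ_ng {p : ℂ} (hp0 : p ≠ 0) (hp : ‖p‖ < 1) : Summable fun n : ℤ => (n : ℂ) * g p n := by
  have h1 := (summ_g_pow hp0 hp (z := 2) two_ne_zero).norm
  have h2 := (summ_g_pow hp0 hp (z := 2⁻¹) (by norm_num)).norm
  refine Summable.of_norm_bounded (h1.add h2) fun n => ?_
  simp only [norm_mul, norm_zpow, norm_inv, Complex.norm_intCast, Complex.norm_ofNat]
  have := abs_le_pow n
  rw [inv_zpow', ← mul_add, mul_comm]
  gcongr

end NS
namespace NS

lemma summ_bdd {ι : Type*} {f b : ι → ℂ} (hf : Summable f) {C : ℝ} (hb : ∀ i, ‖b i‖ ≤ C) :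
    Summable fun i => f i * b i := by
  refine Summable.of_norm_bounded (hf.norm.mul_right C) fun i => ?_
  rw [norm_mul]
  exact mul_le_mul_of_nonneg_left (hb i) (norm_nonneg _)

lemma uu_bdd {p : ℂ} (hp : ‖p‖ < 1) : ∃ C : ℝ, 0 < C ∧ ∀ m n, ‖u p m * u p n‖ ≤ C := by
  obtain ⟨C, hC, h⟩ := u_bdd hp
  refine ⟨C * C, by positivity, fun m n => ?_⟩
  rw [norm_mul]
  exact mul_le_mul (h m) (h n) (norm_nonneg _) hC.le

lemma g_bdd {p : ℂ} (hp0 : p ≠ 0) (hp : ‖p‖ < 1) (n : ℤ) : ‖g p n‖ ≤ 1 := by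
  unfold g
  rw [norm_zpow]
  apply zpow_le_one₀ (norm_pos_iff.2 hp0) hp.le
  have := tri n
  rcases le_or_gt 0 n with h | h
  · nlinarith
  · nlinarith [show 0 ≤ -(n + 1) by omega]

lemma gg {p : ℂ} (hp0 : p ≠ 0) (c j : ℤ) :
    g p (j + c) * g p (j - 1) = g p c * p ^ (j * (j + c)) := by
  unfold g
  rw [← zpow_add₀ hp0, ← zpow_add₀ hp0]
  congr 1
  have h1 := tri (j + c)
  have h2 := tri (j - 1)
  have h3 := tri c
  linarith

lemma summ_gF {p : ℂ} (hp0 : p ≠ 0) (hp : ‖p‖ < 1) (c : ℤ) :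
    Summable fun j : ℤ => g p (j + c) * g p (j - 1) * (u p j * u p (j + c)) := by
  obtain ⟨C, hC, h⟩ := uu_bdd hp
  refine summ_bdd (summ_bdd ?_ fun i => g_bdd hp0 hp _) fun i => h _ _
  exact (summ_g hp0 hp).comp_injective (add_left_injective c)

noncomputable def Ft (p : ℂ) (c j : ℤ) : ℂ := p ^ (j * (j + c)) * (u p j * u p (j + c))

noncomputable def F (p : ℂ) (c : ℤ) : ℂ := ∑' j : ℤ, Ft p c j

lemma summ_F {p : ℂ} (hp0 : p ≠ 0) (hp : ‖p‖ < 1) (c : ℤ) : Summable (Ft p c) := by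
  refine ((summ_gF hp0 hp c).mul_left (g p c)⁻¹).congr fun j => ?_
  rw [gg hp0, Ft]
  have := g_ne hp0 c
  field_simp

lemma F_symm (p : ℂ) (c : ℤ) : F p (-c) = F p c := by
  unfold F
  rw [← (Equiv.addRight c).tsum_eq]
  refine tsum_congr fun j => ?_
  simp only [Ft, Equiv.coe_addRight, add_neg_cancel_right]
  rw [mul_comm (j + c), mul_comm (u p (j + c))]

lemma F_rec {p : ℂ} (hp0 : p ≠ 0) (hp : ‖p‖ < 1) (c : ℤ) :
    F p c - F p (c + 1) = - p ^ (c + 1) * (F p (c + 1) - F p (c + 2)) := by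
  have e : F p (c + 2) = ∑' j : ℤ, Ft p (c + 2) (j - 1) := by
    unfold F
    rw [← (Equiv.subRight (1 : ℤ)).tsum_eq]; rfl
  have s2 : Summable fun j : ℤ => Ft p (c + 2) (j - 1) :=
    (summ_F hp0 hp (c + 2)).comp_injective (sub_left_injective (b := (1 : ℤ)))
  have s1 := summ_F hp0 hp (c + 1)
  have s0 := summ_F hp0 hp c
  rw [e]
  have : F p c = F p (c + 1) - p ^ (c + 1) * F p (c + 1)
      + p ^ (c + 1) * ∑' j : ℤ, Ft p (c + 2) (j - 1) := by
    unfold F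
    rw [← tsum_mul_left, ← tsum_mul_left, ← Summable.tsum_sub s1 (s1.mul_left _),
      ← Summable.tsum_add (s1.sub (s1.mul_left _)) (s2.mul_left _)]
    refine tsum_congr fun j => ?_
    unfold Ft
    have r1 := u_rec hp (j + (c + 1))
    have r2 := u_rec hp j
    rw [show j + (c + 1) - 1 = j + c by ring] at r1
    rw [show j - 1 + (c + 2) = j + (c + 1) by ring, r1, r2]
    rw [show j * (j + (c + 1)) = j * (j + c) + j by ring, zpow_add₀ hp0 _ j,
      show (j - 1) * (j + (c + 1)) = j * (j + c) + -(c + 1) by ring, zpow_add₀ hp0 _ (-(c + 1)),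
      zpow_add₀ hp0 j (c + 1), zpow_neg]
    have := zpow_ne_zero (c + 1) hp0
    field_simp
    ring
  linear_combination this

lemma F_tendsto {p : ℂ} (hp0 : p ≠ 0) (hp : ‖p‖ < 1) :
    Tendsto (fun c : ℕ => F p c) atTop (𝓝 (qPochInf p p)⁻¹) := by
  obtain ⟨C, hC, h⟩ := uu_bdd hp
  have e : (qPochInf p p)⁻¹ = ∑' j : ℤ, if j = 0 then (qPochInf p p)⁻¹ else 0 := by
    rw [tsum_ite_eq]
  rw [e]
  unfold F
  apply tendsto_tsum_of_dominated_convergence (bound := fun j : ℤ => ‖g p (j - 1)‖ * C)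
  · exact ((summ_g hp0 hp).norm.comp_injective (sub_left_injective (b := (1 : ℤ)))).mul_right C
  · intro j
    rcases lt_trichotomy j 0 with hj | hj | hj
    · simp only [Ft, u_neg p hj, zero_mul, mul_zero, if_neg hj.ne]
      exact tendsto_const_nhds
    · subst hj
      simp only [Ft, zero_mul, zpow_zero, one_mul, zero_add, if_true]
      have h0 : u p 0 = 1 := by simp [u, qPoch]
      simp only [h0, one_mul]
      exact u_tendsto hp
    · simp only [if_neg hj.ne']
      obtain ⟨k, rfl⟩ : ∃ k : ℕ, j = (k : ℤ) + 1 := ⟨(j - 1).toNat, by omega⟩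
      have hb : ∀ c : ℕ, ‖Ft p c ((k : ℤ) + 1)‖ ≤ ‖p‖ ^ c * C := by
        intro c
        unfold Ft
        rw [norm_mul, norm_zpow]
        refine mul_le_mul ?_ (h _ _) (norm_nonneg _) (by positivity)
        rw [← zpow_natCast]
        apply zpow_le_zpow_right_of_le_one₀ (norm_pos_iff.2 hp0) hp.le
        have : 0 ≤ (k : ℤ) := by positivity
        have : 0 ≤ (c : ℤ) := by positivity
        nlinarith [mul_nonneg (show 0 ≤ (k : ℤ) by positivity) (show 0 ≤ (c : ℤ) by positivity)]
      apply squeeze_zero_norm hb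
      simpa using (tendsto_pow_atTop_nhds_zero_of_lt_one (norm_nonneg p) hp).mul_const C
  · refine Eventually.of_forall fun c j => ?_
    unfold Ft
    rcases lt_or_ge j 0 with hj | hj
    · simp only [u_neg p hj, zero_mul, mul_zero, norm_zero]; positivity
    · rw [norm_mul]
      refine mul_le_mul ?_ (h _ _) (norm_nonneg _) (norm_nonneg _)
      unfold g
      rw [norm_zpow, norm_zpow]
      apply zpow_le_zpow_right_of_le_one₀ (norm_pos_iff.2 hp0) hp.le
      have := tri (j - 1)
      have : 0 ≤ (c : ℤ) := by positivity
      nlinarith [mul_nonneg hj this]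

lemma F_eq_nat {p : ℂ} (hp0 : p ≠ 0) (hp : ‖p‖ < 1) (c : ℕ) : F p c = (qPochInf p p)⁻¹ := by
  have hD : Tendsto (fun c : ℕ => ‖F p c - F p ((c + 1 : ℕ) : ℤ)‖) atTop (𝓝 0) := by
    have := (F_tendsto hp0 hp).sub ((tendsto_add_atTop_iff_nat 1).2 (F_tendsto hp0 hp))
    simpa using this.norm
  have hmono : Monotone (fun c : ℕ => ‖F p c - F p ((c + 1 : ℕ) : ℤ)‖) := by
    apply monotone_nat_of_le_succ
    intro n
    have := F_rec hp0 hp n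
    push_cast
    rw [this, add_assoc, show (1 : ℤ) + 1 = 2 by norm_num, norm_mul, norm_neg, norm_zpow]
    have h1 : ‖p‖ ^ ((n : ℤ) + 1) ≤ 1 := zpow_le_one₀ (norm_pos_iff.2 hp0) hp.le (by positivity)
    nlinarith [norm_nonneg (F p (n + 1) - F p (n + 2))]
  have hz : ∀ c : ℕ, F p c = F p ((c + 1 : ℕ) : ℤ) := by
    intro c
    have := hmono.ge_of_tendsto hD c
    exact sub_eq_zero.1 (norm_le_zero_iff.1 this)
  have hc : ∀ c : ℕ, F p c = F p (0 : ℕ) := by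
    intro c
    induction c with
    | zero => rfl
    | succ n ih => rw [← hz n, ih]
  have hl : Tendsto (fun c : ℕ => F p c) atTop (𝓝 (F p (0 : ℕ))) := by
    simp only [hc]; exact tendsto_const_nhds
  rw [hc c]
  exact tendsto_nhds_unique hl (F_tendsto hp0 hp)

lemma F_eq {p : ℂ} (hp0 : p ≠ 0) (hp : ‖p‖ < 1) (c : ℤ) : F p c = (qPochInf p p)⁻¹ := by
  obtain ⟨k, rfl | rfl⟩ := c.eq_nat_or_neg
  · exact F_eq_nat hp0 hp k
  · rw [F_symm]; exact F_eq_nat hp0 hp k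

/-- Euler -/
noncomputable def Eu (p z : ℂ) : ℂ := ∑' n : ℕ, g p ((n : ℤ) - 1) * z ^ n * u p n

lemma summ_Eu {p : ℂ} (hp0 : p ≠ 0) (hp : ‖p‖ < 1) (z : ℂ) :
    Summable fun n : ℕ => g p ((n : ℤ) - 1) * z ^ n * u p n := by
  obtain ⟨C, hC, h⟩ := u_bdd hp
  refine summ_bdd ?_ fun i => h _
  rcases eq_or_ne z 0 with rfl | hz
  · apply summable_of_hasFiniteSupport
    refine (Set.finite_singleton 0).subset fun n hn => ?_
    by_contra h0
    exact hn (by simp [show n ≠ 0 from h0])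
  · have h1 := (summ_g_pow hp0 hp hz).comp_injective (i := fun n : ℕ => (n : ℤ) - 1)
      (fun a b hab => by simp only at hab; omega)
    refine (h1.mul_right z).congr fun n => ?_
    simp only [Function.comp]
    rw [mul_assoc, ← zpow_add_one₀ hz, sub_add_cancel, zpow_natCast]

lemma Eu_step {p : ℂ} (hp0 : p ≠ 0) (hp : ‖p‖ < 1) (z : ℂ) : Eu p z = (1 + z) * Eu p (z * p) := by
  have s0 := summ_Eu hp0 hp z
  have s1 := summ_Eu hp0 hp (z * p)
  have : Eu p z - Eu p (z * p) = z * Eu p (z * p) := by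
    unfold Eu
    rw [← Summable.tsum_sub s0 s1, (s0.sub s1).tsum_eq_zero_add, ← tsum_mul_left]
    simp only [pow_zero, sub_self, zero_add]
    refine tsum_congr fun n => ?_
    have r := u_rec hp ((n : ℤ) + 1)
    rw [add_sub_cancel_right] at r
    have r2 := g_pred hp0 (n : ℤ)
    push_cast
    rw [add_sub_cancel_right, r, ← r2]
    rw [zpow_natCast, show ((n : ℤ) + 1) = ((n + 1 : ℕ) : ℤ) by push_cast; ring, zpow_natCast]
    ring
  linear_combination this

lemma Eu_eq {p : ℂ} (hp0 : p ≠ 0) (hp : ‖p‖ < 1) (z : ℂ) : Eu p z = qPochInf (-z) p := by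
  have h1 : ∀ N : ℕ, Eu p z = qPoch (-z) p N * Eu p (z * p ^ N) := by
    intro N
    induction N with
    | zero => simp [qPoch]
    | succ n ih =>
      rw [ih, Eu_step hp0 hp (z * p ^ n)]
      unfold qPoch
      rw [Finset.prod_range_succ, mul_assoc z, ← pow_succ]
      ring
  have h2 : Tendsto (fun N : ℕ => Eu p (z * p ^ N)) atTop (𝓝 1) := by
    have e : (1 : ℂ) = ∑' n : ℕ, if n = 0 then 1 else 0 := by rw [tsum_ite_eq]
    rw [e]
    unfold Eu
    apply tendsto_tsum_of_dominated_convergence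
      (bound := fun n : ℕ => ‖g p ((n : ℤ) - 1) * z ^ n * u p n‖)
    · exact (summ_Eu hp0 hp z).norm
    · intro n
      rcases Nat.eq_zero_or_pos n with rfl | hn
      · have : g p (-1) = 1 := by simp [g]
        simp [this, u, qPoch]
      · simp only [if_neg hn.ne']
        have h3 : Tendsto (fun N : ℕ => z * p ^ N) atTop (𝓝 0) := by
          simpa using (tendsto_pow_atTop_nhds_zero_of_norm_lt_one hp).const_mul z
        have h4 := ((h3.pow n).const_mul (g p ((n : ℤ) - 1))).mul_const (u p n)
        simpa [hn.ne'] using h4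
    · refine Eventually.of_forall fun N n => ?_
      simp only [norm_mul, norm_pow]
      have : (‖z‖ * ‖p‖ ^ N) ^ n ≤ ‖z‖ ^ n := by
        apply pow_le_pow_left₀ (by positivity)
        exact mul_le_of_le_one_right (norm_nonneg z) (pow_le_one₀ (norm_nonneg p) hp.le)
      gcongr
  have h3 := (qPoch_tendsto hp (-z)).mul h2
  rw [mul_one] at h3
  exact tendsto_nhds_unique (tendsto_const_nhds.congr h1) h3

lemma summ_Z {f : ℕ → ℂ} {h : ℤ → ℂ} (hn : ∀ n : ℕ, h n = f n) (hneg : ∀ n : ℤ, n < 0 → h n = 0)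
    (hf : Summable f) : Summable h ∧ ∑' n, h n = ∑' n, f n := by
  have hs : Function.support h ⊆ Set.range ((↑) : ℕ → ℤ) := by
    intro n hn'
    rcases lt_or_ge n 0 with h1 | h1
    · exact absurd (hneg n h1) hn'
    · exact ⟨n.toNat, by simp [h1]⟩
  have e : f = h ∘ ((↑) : ℕ → ℤ) := funext fun n => (hn n).symm
  constructor
  · have := (Nat.cast_injective (R := ℤ)).summable_iff (f := h) (fun x hx => by
      by_contra h0; exact hx (hs h0))
    rw [← this, ← e]; exact hf
  · rw [e]; exact ((Nat.cast_injective (R := ℤ)).tsum_eq hs).symm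

lemma reindex {α β γ : Type*} (E : β × γ ≃ α) {f : α → ℂ} (hf : Summable f) :
    ∑' a, f a = ∑' b, ∑' c, f (E (b, c)) := by
  rw [← E.tsum_eq]
  exact Summable.tsum_prod (E.summable_iff.2 hf)

/-- Jacobi triple product -/
lemma jtp_s12 {p : ℂ} (hp0 : p ≠ 0) (hp : ‖p‖ < 1) {z : ℂ} (hz : z ≠ 0) :
    ∑' n : ℤ, g p n * z ^ n = qPochInf (-(z * p)) p * qPochInf (-z⁻¹) p * qPochInf p p := by
  have a := summ_Z (f := fun n : ℕ => g p ((n : ℤ) - 1) * (z * p) ^ n * u p n)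
    (h := fun n : ℤ => g p n * z ^ n * u p n)
    (fun n => by
      have := g_pred hp0 (n : ℤ)
      simp only [zpow_natCast] at this ⊢
      rw [← this, mul_pow]; ring)
    (fun n hn => by simp [u_neg p hn]) (summ_Eu hp0 hp _)
  have b := summ_Z (f := fun n : ℕ => g p ((n : ℤ) - 1) * (z⁻¹) ^ n * u p n)
    (h := fun n : ℤ => g p (n - 1) * (z⁻¹) ^ n * u p n)
    (fun n => by simp only [zpow_natCast])
    (fun n hn => by simp [u_neg p hn]) (summ_Eu hp0 hp _)
  have ea := a.2.trans (Eu_eq hp0 hp (z * p))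
  have eb := b.2.trans (Eu_eq hp0 hp z⁻¹)
  rw [← ea, ← eb, tsum_mul_tsum_of_summable_norm a.1.norm b.1.norm]
  have s := summable_mul_of_summable_norm a.1.norm b.1.norm
  let E : ℤ × ℤ ≃ ℤ × ℤ :=
    { toFun := fun x => (x.2 + x.1, x.2)
      invFun := fun x => (x.1 - x.2, x.2)
      left_inv := fun x => by simp
      right_inv := fun x => by simp }
  rw [reindex E s, ← tsum_mul_right]
  refine tsum_congr fun c => ?_
  have : ∀ j : ℤ, g p (E (c, j)).1 * z ^ (E (c, j)).1 * u p (E (c, j)).1 *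
      (g p ((E (c, j)).2 - 1) * z⁻¹ ^ (E (c, j)).2 * u p (E (c, j)).2)
      = g p c * z ^ c * Ft p c j := by
    intro j
    simp only [E, Equiv.coe_fn_mk, Ft]
    have h1 := gg hp0 c j
    rw [zpow_add₀ hz, inv_zpow]
    have h2 := zpow_ne_zero j hz
    field_simp
    linear_combination (u p (j + c) * u p j) * h1
  simp only [this]
  rw [tsum_mul_left]
  change _ = g p c * z ^ c * F p c * _
  rw [F_eq hp0 hp, mul_assoc (g p c * z ^ c), inv_mul_cancel₀ (qInf_ne hp hp), mul_one]

end NS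
namespace NS

noncomputable def Kt (p : ℂ) (c j : ℤ) : ℂ := g p (j + c) * g p j * (u p (j + c) * u p j)
noncomputable def K (p : ℂ) (c : ℤ) : ℂ := ∑' j : ℤ, Kt p c j
noncomputable def Mt (p : ℂ) (γ : ℤ → ℂ) (m k : ℤ) : ℂ := γ (2 * k - m) * (u p k * u p (m - k))
noncomputable def M (p : ℂ) (γ : ℤ → ℂ) (m : ℤ) : ℂ := ∑' k : ℤ, Mt p γ m k
noncomputable def γ1 (p : ℂ) (t : ℤ) : ℂ := g p (t - 1)
noncomputable def γ2 (p : ℂ) (t : ℤ) : ℂ := t * g p (t - 1)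

lemma summ_γ1 {p : ℂ} (hp0 : p ≠ 0) (hp : ‖p‖ < 1) : Summable (γ1 p) :=
  (summ_g hp0 hp).comp_injective (sub_left_injective (b := (1 : ℤ)))

lemma summ_γ2 {p : ℂ} (hp0 : p ≠ 0) (hp : ‖p‖ < 1) : Summable (γ2 p) := by
  have h := (((summ_ng hp0 hp).add (summ_g hp0 hp)).comp_injective
    (sub_left_injective (b := (1 : ℤ))))
  refine h.congr fun t => ?_
  simp only [Function.comp, γ2]
  push_cast
  ring

lemma summ_Kt2 {p : ℂ} (hp0 : p ≠ 0) (hp : ‖p‖ < 1) :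
    Summable fun x : ℤ × ℤ => Kt p x.1 x.2 := by
  obtain ⟨C, hC, h⟩ := uu_bdd hp
  have s := (summ_g hp0 hp).norm
  refine summ_bdd ?_ fun i => h _ _
  exact (summable_mul_of_summable_norm s s).comp_injective
    (i := fun x : ℤ × ℤ => (x.2 + x.1, x.2)) (fun x y hxy => by
      simp only [Prod.mk.injEq] at hxy
      ext <;> omega)

lemma summ_Kt {p : ℂ} (hp0 : p ≠ 0) (hp : ‖p‖ < 1) (c : ℤ) : Summable (Kt p c) :=
  (summ_Kt2 hp0 hp).prod_factor c

lemma summ_K {p : ℂ} (hp0 : p ≠ 0) (hp : ‖p‖ < 1) : Summable (K p) := (summ_Kt2 hp0 hp).prod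

lemma K_add {p : ℂ} (hp0 : p ≠ 0) (hp : ‖p‖ < 1) (c : ℤ) :
    K p c + K p (c + 1) = g p c * (qPochInf p p)⁻¹ := by
  have e : K p (c + 1) = ∑' j : ℤ, Kt p (c + 1) (j - 1) := by
    unfold K
    rw [← (Equiv.subRight (1 : ℤ)).tsum_eq]; rfl
  have s2 : Summable fun j : ℤ => Kt p (c + 1) (j - 1) :=
    (summ_Kt hp0 hp (c + 1)).comp_injective (sub_left_injective (b := (1 : ℤ)))
  rw [e, ← F_eq hp0 hp c]
  unfold K F
  rw [← Summable.tsum_add (summ_Kt hp0 hp c) s2, ← tsum_mul_left]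
  refine tsum_congr fun j => ?_
  unfold Kt Ft
  rw [show j - 1 + (c + 1) = j + c by ring, u_rec hp j, ← g_pred hp0 j]
  have h := gg hp0 c j
  have h2 := g_pred hp0 j
  linear_combination (u p j * u p (j + c)) * h

lemma summ_Mt {p : ℂ} (hp : ‖p‖ < 1) {γ : ℤ → ℂ} (hγ : Summable γ) (m : ℤ) :
    Summable (Mt p γ m) := by
  obtain ⟨C, hC, h⟩ := uu_bdd hp
  refine summ_bdd ?_ fun i => h _ _
  exact hγ.comp_injective (i := fun k : ℤ => 2 * k - m) (fun x y hxy => by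
    simp only at hxy; omega)

lemma M_bdd {p : ℂ} (hp : ‖p‖ < 1) {γ : ℤ → ℂ} (hγ : Summable γ) :
    ∃ C : ℝ, ∀ m, ‖M p γ m‖ ≤ C := by
  obtain ⟨C, hC, h⟩ := uu_bdd hp
  refine ⟨∑' t : ℤ, ‖γ t‖ * C, fun m => ?_⟩
  refine (norm_tsum_le_tsum_norm (summ_Mt hp hγ m).norm).trans ?_
  refine Summable.tsum_le_tsum_of_inj (fun k : ℤ => 2 * k - m)
    (fun x y hxy => by simp only at hxy; omega) (fun c _ => by positivity) (fun k => ?_)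
    (summ_Mt hp hγ m).norm (hγ.norm.mul_right C)
  unfold Mt
  rw [norm_mul]
  exact mul_le_mul_of_nonneg_left (h _ _) (norm_nonneg _)

lemma a_symm {p : ℂ} (hp0 : p ≠ 0) (hp : ‖p‖ < 1) (k l : ℤ) :
    g p (k - l - 1) * (u p k * u p l) + g p (k - l) * (u p k * u p (l - 1))
    = g p (l - k - 1) * (u p l * u p k) + g p (l - k) * (u p l * u p (k - 1)) := by
  rw [u_rec hp k, u_rec hp l, g_refl' p (l - k - 1) (k - l) (by ring),
    g_refl' p (l - k) (k - l - 1) (by ring), ← g_pred hp0 (k - l)]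
  have h : p ^ k = p ^ (k - l) * p ^ l := by rw [← zpow_add₀ hp0]; congr 1; ring
  rw [h]
  ring

lemma M_rec {p : ℂ} (hp0 : p ≠ 0) (hp : ‖p‖ < 1) (m : ℤ) :
    M p (γ2 p) (m + 1) + M p (γ2 p) m = M p (γ1 p) m := by
  have s1 := summ_Mt hp (summ_γ1 hp0 hp) m
  have s2 := summ_Mt hp (summ_γ2 hp0 hp) m
  have s3 := summ_Mt hp (summ_γ2 hp0 hp) (m + 1)
  have key : ∑' k : ℤ, (Mt p (γ2 p) (m + 1) k + Mt p (γ2 p) m k - Mt p (γ1 p) m k) = 0 := by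
    set D : ℤ → ℂ := fun k => Mt p (γ2 p) (m + 1) k + Mt p (γ2 p) m k - Mt p (γ1 p) m k with hD
    have hanti : ∀ k, D (m + 1 - k) = - D k := by
      intro k
      have := a_symm hp0 hp k (m + 1 - k)
      simp only [hD, Mt, γ1, γ2]
      rw [show 2 * (m + 1 - k) - (m + 1) - 1 = m + 1 - k - k - 1 by ring,
        show 2 * (m + 1 - k) - m - 1 = m + 1 - k - k by ring,
        show m + 1 - (m + 1 - k) = k by ring, show m - (m + 1 - k) = k - 1 by ring,
        show 2 * k - (m + 1) - 1 = k - (m + 1 - k) - 1 by ring,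
        show 2 * k - m - 1 = k - (m + 1 - k) by ring,
        show m - k = m + 1 - k - 1 by ring]
      push_cast
      linear_combination (2 * (k : ℂ) - m - 1) * this
    have h2 : ∑' k, D k = ∑' k, D (m + 1 - k) := ((Equiv.subLeft (m + 1)).tsum_eq D).symm
    simp only [hanti, tsum_neg] at h2
    have : (2 : ℂ) * ∑' k, D k = 0 := by linear_combination h2
    simpa using this
  rw [Summable.tsum_sub (s3.add s2) s1, Summable.tsum_add s3 s2] at key
  exact sub_eq_zero.1 key

lemma summ_conv {f h b : ℤ → ℂ} (hf : Summable f) (hh : Summable h) {C : ℝ}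
    (hb : ∀ i, ‖b i‖ ≤ C) : Summable fun x : ℤ × ℤ => f x.1 * h (x.1 - x.2) * b x.2 := by
  refine summ_bdd ?_ fun i => hb _
  exact (summable_mul_of_summable_norm hf.norm hh.norm).comp_injective
    (i := fun x : ℤ × ℤ => (x.1, x.1 - x.2)) (fun x y hxy => by
      simp only [Prod.mk.injEq] at hxy
      ext <;> omega)

/-- the three-fold summand -/
noncomputable def h3 (p : ℂ) (γ : ℤ → ℂ) (x : (ℤ × ℤ) × ℤ) : ℂ :=
  g p x.1.1 * g p (x.1.1 - x.1.2) * Mt p γ x.1.2 x.2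

lemma summ_h3 {p : ℂ} (hp0 : p ≠ 0) (hp : ‖p‖ < 1) {γ : ℤ → ℂ} (hγ : Summable γ) :
    Summable (h3 p γ) := by
  obtain ⟨C, hC, h⟩ := uu_bdd hp
  have s := (summ_g hp0 hp).norm
  have s2 := summable_mul_of_summable_norm s s
  have s3 := summable_mul_of_summable_norm s2.norm hγ.norm
  have s4 := s3.comp_injective
    (i := fun x : (ℤ × ℤ) × ℤ => ((x.1.1, x.1.1 - x.1.2), 2 * x.2 - x.1.2)) (fun x y hxy => by
      simp only [Prod.mk.injEq] at hxy
      ext <;> omega)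
  refine (summ_bdd s4 (b := fun x => u p x.2 * u p (x.1.2 - x.2)) fun i => h _ _).congr fun x => ?_
  simp only [Function.comp, h3, Mt]
  ring

def E3 : (ℤ × ℤ) × ℤ ≃ (ℤ × ℤ) × ℤ where
  toFun x := ((x.1.2 + x.2, x.1.1 + 2 * x.2), x.1.1 + x.2)
  invFun x := ((2 * x.2 - x.1.2, x.1.1 - x.1.2 + x.2), x.1.2 - x.2)
  left_inv x := by ext <;> simp <;> ring
  right_inv x := by ext <;> simp <;> ring

lemma final3 {p : ℂ} (hp0 : p ≠ 0) (hp : ‖p‖ < 1) {γ : ℤ → ℂ} (hγ : Summable γ) :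
    ∑' x : ℤ × ℤ, g p x.1 * g p (x.1 - x.2) * M p γ x.2
      = (∑' x : ℤ × ℤ, γ x.1 * g p x.2 * g p (x.2 - x.1)) * (qPochInf p p)⁻¹ := by
  have s := summ_h3 hp0 hp hγ
  have e1 : ∑' x : ℤ × ℤ, g p x.1 * g p (x.1 - x.2) * M p γ x.2 = ∑' x, h3 p γ x := by
    rw [s.tsum_prod]
    refine tsum_congr fun x => ?_
    unfold M
    rw [← tsum_mul_left]
    rfl
  rw [e1, reindex E3 s, ← tsum_mul_right]
  refine tsum_congr fun x => ?_
  rw [← F_eq hp0 hp x.1]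
  unfold F
  rw [← tsum_mul_left]
  refine tsum_congr fun l => ?_
  obtain ⟨t, e⟩ := x
  simp only [E3, h3, Mt, Ft, Equiv.coe_fn_mk]
  rw [show 2 * (t + l) - (t + 2 * l) = t by ring, show t + 2 * l - (t + l) = l by ring,
    show e + l - (t + 2 * l) = e - t - l by ring, add_comm t l]
  have : g p (e + l) * g p (e - t - l) = g p e * g p (e - t) * p ^ (l * (l + t)) := by
    unfold g
    rw [← zpow_add₀ hp0, ← zpow_add₀ hp0, ← zpow_add₀ hp0]
    congr 1
    have h1 := tri (e + l)
    have h2 := tri (e - t - l)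
    have h3 := tri e
    have h4 := tri (e - t)
    linarith
  linear_combination (γ t * (u p (l + t) * u p l)) * this

/-- A2 theta -/
noncomputable def X (p : ℂ) (x : ℤ × ℤ) : ℂ := γ1 p x.1 * g p x.2 * g p (x.2 - x.1)

lemma summ_X {p : ℂ} (hp0 : p ≠ 0) (hp : ‖p‖ < 1) {γ : ℤ → ℂ} (hγ : Summable γ) :
    Summable fun x : ℤ × ℤ => γ x.1 * g p x.2 * g p (x.2 - x.1) :=
  summ_bdd (summable_mul_of_summable_norm hγ.norm (summ_g hp0 hp).norm) fun i => g_bdd hp0 hp _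

def σ : ℤ × ℤ ≃ ℤ × ℤ where
  toFun x := (-x.2, x.1 - x.2 - 1)
  invFun x := (x.2 - x.1 + 1, -x.1)
  left_inv x := by ext <;> simp <;> ring
  right_inv x := by ext <;> simp <;> ring

lemma X_σ (p : ℂ) (x : ℤ × ℤ) : X p (σ x) = X p x := by
  simp only [X, σ, γ1, Equiv.coe_fn_mk]
  rw [g_refl' p (-x.2 - 1) x.2 (by ring), g_refl' p (x.1 - x.2 - 1) (x.2 - x.1) (by ring),
    show x.1 - x.2 - 1 - -x.2 = x.1 - 1 by ring]
  ring

lemma third {p : ℂ} (hp0 : p ≠ 0) (hp : ‖p‖ < 1) :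
    3 * ∑' x : ℤ × ℤ, γ2 p x.1 * g p x.2 * g p (x.2 - x.1) = ∑' x, X p x := by
  set Y : ℤ × ℤ → ℂ := fun x => x.1 * X p x with hY
  have e : (fun x : ℤ × ℤ => γ2 p x.1 * g p x.2 * g p (x.2 - x.1)) = Y := by
    funext x; simp only [hY, γ2, X, γ1]; ring
  have sY : Summable Y := e ▸ summ_X hp0 hp (summ_γ2 hp0 hp)
  rw [e]
  have h1 : ∑' x, Y (σ x) = ∑' x, Y x := σ.tsum_eq Y
  have h2 : ∑' x, Y (σ (σ x)) = ∑' x, Y x := (σ.tsum_eq fun x => Y (σ x)).trans h1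
  have s1 : Summable fun x => Y (σ x) := σ.summable_iff.2 sY
  have s2 : Summable fun x => Y (σ (σ x)) := σ.summable_iff.2 s1
  have : ∑' x, X p x = ∑' x, Y x + ∑' x, Y (σ x) + ∑' x, Y (σ (σ x)) := by
    rw [← Summable.tsum_add sY s1, ← Summable.tsum_add (sY.add s1) s2]
    refine tsum_congr fun x => ?_
    simp only [hY, X_σ]
    simp only [σ, Equiv.coe_fn_mk]
    push_cast
    ring
  rw [this, h1, h2]
  ring

lemma main_A {p : ℂ} (hp0 : p ≠ 0) (hp : ‖p‖ < 1) :
    ∑' x : ℤ × ℤ, K p x.1 * g p (x.1 - x.2) * M p (γ1 p) x.2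
      = 2 / 3 * (∑' x, X p x) * ((qPochInf p p)⁻¹) ^ 2 := by
  obtain ⟨C1, hC1⟩ := M_bdd hp (summ_γ1 hp0 hp)
  obtain ⟨C2, hC2⟩ := M_bdd hp (summ_γ2 hp0 hp)
  have sg := summ_g hp0 hp
  have sK := summ_K hp0 hp
  have sK1 : Summable fun c : ℤ => K p (c + 1) := sK.comp_injective (add_left_injective 1)
  have sA := summ_conv sK sg hC1
  have sB := summ_conv sK1 sg hC1
  have sB1 := summ_conv sK1 sg (b := fun m => M p (γ2 p) (m + 1)) (fun i => hC2 _)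
  have sB2 := summ_conv sK1 sg hC2
  have sB3 := summ_conv sK sg hC2
  have hAB : ∑' x : ℤ × ℤ, K p x.1 * g p (x.1 - x.2) * M p (γ1 p) x.2
      + ∑' x : ℤ × ℤ, K p (x.1 + 1) * g p (x.1 - x.2) * M p (γ1 p) x.2
      = (∑' x, X p x) * ((qPochInf p p)⁻¹) ^ 2 := by
    rw [← Summable.tsum_add sA sB, pow_two, ← mul_assoc]
    have := final3 hp0 hp (summ_γ1 hp0 hp)
    unfold X
    rw [← this, ← tsum_mul_right]
    refine tsum_congr fun x => ?_
    have := K_add hp0 hp x.1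
    linear_combination (g p (x.1 - x.2) * M p (γ1 p) x.2) * this
  have hB : ∑' x : ℤ × ℤ, K p (x.1 + 1) * g p (x.1 - x.2) * M p (γ1 p) x.2
      = (∑' x : ℤ × ℤ, γ2 p x.1 * g p x.2 * g p (x.2 - x.1)) * ((qPochInf p p)⁻¹) ^ 2 := by
    have e1 : ∑' x : ℤ × ℤ, K p (x.1 + 1) * g p (x.1 - x.2) * M p (γ1 p) x.2
        = ∑' x : ℤ × ℤ, K p (x.1 + 1) * g p (x.1 - x.2) * M p (γ2 p) (x.2 + 1)
        + ∑' x : ℤ × ℤ, K p (x.1 + 1) * g p (x.1 - x.2) * M p (γ2 p) x.2 := by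
      rw [← Summable.tsum_add sB1 sB2]
      refine tsum_congr fun x => ?_
      rw [← M_rec hp0 hp]; ring
    have e2 : ∑' x : ℤ × ℤ, K p (x.1 + 1) * g p (x.1 - x.2) * M p (γ2 p) (x.2 + 1)
        = ∑' x : ℤ × ℤ, K p x.1 * g p (x.1 - x.2) * M p (γ2 p) x.2 := by
      rw [← ((Equiv.addRight (1 : ℤ)).prodCongr (Equiv.addRight (1 : ℤ))).tsum_eq
        (fun x : ℤ × ℤ => K p x.1 * g p (x.1 - x.2) * M p (γ2 p) x.2)]
      refine tsum_congr fun x => ?_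
      simp
    rw [e1, e2, ← Summable.tsum_add sB3 sB2, pow_two, ← mul_assoc,
      ← final3 hp0 hp (summ_γ2 hp0 hp), ← tsum_mul_right]
    refine tsum_congr fun x => ?_
    have := K_add hp0 hp x.1
    linear_combination (g p (x.1 - x.2) * M p (γ2 p) x.2) * this
  have h3 := third hp0 hp
  rw [hB] at hAB
  linear_combination hAB - (1 / 3) * ((qPochInf p p)⁻¹) ^ 2 * h3

def E4 : (ℤ × ℤ) × (ℤ × ℤ) ≃ ℤ × ℤ × ℤ × ℤ where
  toFun x := (x.2.1 + x.1.1, x.2.1, x.2.2, x.1.2 - x.2.2)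
  invFun x := ((x.1 - x.2.1, x.2.2.1 + x.2.2.2), (x.2.1, x.2.2.1))
  left_inv x := by ext <;> simp
  right_inv x := by ext <;> simp

noncomputable def f4 (p : ℂ) (x : ℤ × ℤ × ℤ × ℤ) : ℂ :=
  g p x.1 * g p x.2.1 * (g p (x.1 - x.2.1 - x.2.2.1 - x.2.2.2) * g p (x.2.2.1 - x.2.2.2 - 1)) *
    ((u p x.1 * u p x.2.1) * (u p x.2.2.1 * u p x.2.2.2))

lemma summ_f4 {p : ℂ} (hp0 : p ≠ 0) (hp : ‖p‖ < 1) : Summable (f4 p) := by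
  obtain ⟨C, hC, h⟩ := uu_bdd hp
  have s := (summ_g hp0 hp).norm
  have s2 := (summable_mul_of_summable_norm s s).norm
  have s4 := (summable_mul_of_summable_norm s2 s2).comp_injective
    (i := fun x : ℤ × ℤ × ℤ × ℤ => ((x.1, x.2.1),
      (x.1 - x.2.1 - x.2.2.1 - x.2.2.2, x.2.2.1 - x.2.2.2 - 1))) (fun x y hxy => by
      simp only [Prod.mk.injEq] at hxy
      ext <;> omega)
  refine summ_bdd (C := C * C) s4 fun x => ?_
  rw [norm_mul]
  exact mul_le_mul (h _ _) (h _ _) (norm_nonneg _) hC.le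

lemma tsum_f4 {p : ℂ} (hp0 : p ≠ 0) (hp : ‖p‖ < 1) :
    ∑' x, f4 p x = 2 / 3 * (∑' x, X p x) * ((qPochInf p p)⁻¹) ^ 2 := by
  rw [← main_A hp0 hp, reindex E4 (summ_f4 hp0 hp)]
  refine tsum_congr fun x => ?_
  have e : K p x.1 * g p (x.1 - x.2) * M p (γ1 p) x.2
      = g p (x.1 - x.2) * (K p x.1 * M p (γ1 p) x.2) := by ring
  rw [e]
  unfold K M
  rw [tsum_mul_tsum_of_summable_norm (summ_Kt hp0 hp x.1).norm
    (summ_Mt hp (summ_γ1 hp0 hp) x.2).norm, ← tsum_mul_left]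
  refine tsum_congr fun y => ?_
  simp only [f4, E4, Kt, Mt, γ1, Equiv.coe_fn_mk]
  rw [show y.2 - (x.2 - y.2) - 1 = 2 * y.2 - x.2 - 1 by ring,
    show y.1 + x.1 - y.1 - y.2 - (x.2 - y.2) = x.1 - x.2 by ring]
  ring

end NS

namespace NS

lemma f4_nat {q : ℂ} (hq0 : q ≠ 0) (i j k l : ℕ) :
    f4 q ((i : ℤ), (j : ℤ), (k : ℤ), (l : ℤ)) =
      q ^ (((i:ℤ)^2 + (j:ℤ)^2 + (k:ℤ)^2 + (l:ℤ)^2 - (i:ℤ)*(j:ℤ) - (i:ℤ)*(k:ℤ) - (i:ℤ)*(l:ℤ)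
        + (j:ℤ)*(k:ℤ) + (j:ℤ)*(l:ℤ) + (i:ℤ) - (k:ℤ)) : ℤ) /
      (qPoch (q ^ 1) (q ^ 1) i * qPoch (q ^ 1) (q ^ 1) j * qPoch (q ^ 1) (q ^ 1) k
        * qPoch (q ^ 1) (q ^ 1) l) := by
  simp only [f4, u_nat, pow_one]
  have e : g q i * g q j * (g q ((i:ℤ) - j - k - l) * g q ((k:ℤ) - l - 1))
      = q ^ (((i:ℤ)^2 + (j:ℤ)^2 + (k:ℤ)^2 + (l:ℤ)^2 - (i:ℤ)*(j:ℤ) - (i:ℤ)*(k:ℤ) - (i:ℤ)*(l:ℤ)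
        + (j:ℤ)*(k:ℤ) + (j:ℤ)*(l:ℤ) + (i:ℤ) - (k:ℤ)) : ℤ) := by
    unfold g
    rw [← zpow_add₀ hq0, ← zpow_add₀ hq0, ← zpow_add₀ hq0]
    congr 1
    have h1 := tri i
    have h2 := tri j
    have h3 := tri ((i:ℤ) - j - k - l)
    have h4 := tri ((k:ℤ) - l - 1)
    linarith
  rw [e, div_eq_mul_inv, mul_inv, mul_inv, mul_inv]
  ring

lemma tsum_nat {q : ℂ} :
    ∑' x : ℕ × ℕ × ℕ × ℕ, f4 q ((x.1 : ℤ), (x.2.1 : ℤ), (x.2.2.1 : ℤ), (x.2.2.2 : ℤ))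
      = ∑' x, f4 q x := by
  refine Function.Injective.tsum_eq
    (g := fun x : ℕ × ℕ × ℕ × ℕ => ((x.1 : ℤ), (x.2.1 : ℤ), (x.2.2.1 : ℤ), (x.2.2.2 : ℤ)))
    (f := f4 q) ?_ ?_
  · intro x y h
    simp only [Prod.mk.injEq, Nat.cast_inj] at h
    ext
    exacts [h.1, h.2.1, h.2.2.1, h.2.2.2]
  · rintro ⟨i, j, k, l⟩ h
    have key : ∀ n : ℤ, u q n ≠ 0 → (n.toNat : ℤ) = n := by
      intro n hn
      by_contra hc
      exact hn (u_neg q (by omega))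
    simp only [Function.mem_support, f4, mul_ne_zero_iff] at h
    obtain ⟨-, ⟨hi, hj⟩, hk, hl⟩ := h
    exact ⟨(i.toNat, j.toNat, k.toNat, l.toNat), by
      simp only [key _ hi, key _ hj, key _ hk, key _ hl]⟩

def EP : (ℤ × ℤ) ⊕ (ℤ × ℤ) ≃ ℤ × ℤ where
  toFun := Sum.elim (fun x => (2 * x.1, x.2 + x.1)) (fun x => (2 * x.1 + 1, x.2 + x.1))
  invFun x := if x.1 % 2 = 0 then Sum.inl (x.1 / 2, x.2 - x.1 / 2)
    else Sum.inr (x.1 / 2, x.2 - x.1 / 2)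
  left_inv := by
    rintro (⟨s, e⟩ | ⟨s, e⟩)
    · have h1 : (2 * s) % 2 = 0 := by omega
      have h2 : (2 * s) / 2 = s := by omega
      simp only [Sum.elim_inl, h1, h2, if_true, add_sub_cancel_right]
    · have h1 : ¬ (2 * s + 1) % 2 = 0 := by omega
      have h2 : (2 * s + 1) / 2 = s := by omega
      simp only [Sum.elim_inr, h1, h2, if_false, add_sub_cancel_right]
  right_inv := by
    rintro ⟨t, e⟩
    by_cases h : t % 2 = 0
    · simp only [h, if_true, Sum.elim_inl, Prod.mk.injEq]
      constructor <;> omega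
    · simp only [h, if_false, Sum.elim_inr, Prod.mk.injEq]
      constructor <;> omega

lemma g_form {q : ℂ} (hq0 : q ≠ 0) (m : ℕ) (c n : ℤ) :
    g (q ^ m) n * (q ^ c) ^ n = q ^ ((m : ℤ) * (n * (n + 1) / 2) + c * n) := by
  unfold g
  rw [← zpow_natCast q m, ← zpow_mul, ← zpow_mul, ← zpow_add₀ hq0]

lemma pow_lt {q : ℂ} (hq : ‖q‖ < 1) {m : ℕ} (hm : m ≠ 0) : ‖q ^ m‖ < 1 := by
  rw [norm_pow]; exact pow_lt_one₀ (norm_nonneg _) hq hm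

lemma X_even {q : ℂ} (hq0 : q ≠ 0) (x : ℤ × ℤ) :
    X q (2 * x.1, x.2 + x.1) =
      (g (q ^ 6) x.1 * (q ^ (-4 : ℤ)) ^ x.1) * (g (q ^ 2) x.2 * (q ^ (0 : ℤ)) ^ x.2) := by
  rw [g_form hq0, g_form hq0, ← zpow_add₀ hq0]
  simp only [X, γ1, g]
  rw [← zpow_add₀ hq0, ← zpow_add₀ hq0]
  congr 1
  have h1 := tri (2 * x.1 - 1)
  have h2 := tri (x.2 + x.1)
  have h3 := tri (x.2 + x.1 - 2 * x.1)
  have h4 := tri x.1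
  have h5 := tri x.2
  push_cast
  linarith

lemma X_odd {q : ℂ} (hq0 : q ≠ 0) (x : ℤ × ℤ) :
    X q (2 * x.1 + 1, x.2 + x.1) =
      (g (q ^ 6) x.1 * (q ^ (-1 : ℤ)) ^ x.1) * (g (q ^ 2) x.2 * (q ^ (-1 : ℤ)) ^ x.2) := by
  rw [g_form hq0, g_form hq0, ← zpow_add₀ hq0]
  simp only [X, γ1, g]
  rw [← zpow_add₀ hq0, ← zpow_add₀ hq0]
  congr 1
  have h1 := tri (2 * x.1 + 1 - 1)
  have h2 := tri (x.2 + x.1)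
  have h3 := tri (x.2 + x.1 - (2 * x.1 + 1))
  have h4 := tri x.1
  have h5 := tri x.2
  push_cast
  linarith

lemma tsum_X {q : ℂ} (hq0 : q ≠ 0) (hq : ‖q‖ < 1) :
    ∑' x, X q x =
      (∑' n : ℤ, g (q ^ 6) n * (q ^ (-4 : ℤ)) ^ n) * (∑' n : ℤ, g (q ^ 2) n * (q ^ (0 : ℤ)) ^ n)
      + (∑' n : ℤ, g (q ^ 6) n * (q ^ (-1 : ℤ)) ^ n)
        * (∑' n : ℤ, g (q ^ 2) n * (q ^ (-1 : ℤ)) ^ n) := by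
  have s : ∀ (m : ℕ) (c : ℤ), m ≠ 0 → Summable fun n : ℤ => ‖g (q ^ m) n * (q ^ c) ^ n‖ :=
    fun m c hm => (summ_g_pow (pow_ne_zero _ hq0) (pow_lt hq hm) (zpow_ne_zero _ hq0)).norm
  rw [tsum_mul_tsum_of_summable_norm (s 6 _ (by norm_num)) (s 2 _ (by norm_num)),
    tsum_mul_tsum_of_summable_norm (s 6 _ (by norm_num)) (s 2 _ (by norm_num)),
    ← EP.tsum_eq]
  have a : ((fun x => X q (EP x)) ∘ Sum.inl) = fun x : ℤ × ℤ =>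
      (g (q ^ 6) x.1 * (q ^ (-4 : ℤ)) ^ x.1) * (g (q ^ 2) x.2 * (q ^ (0 : ℤ)) ^ x.2) :=
    funext fun x => X_even hq0 x
  have b : ((fun x => X q (EP x)) ∘ Sum.inr) = fun x : ℤ × ℤ =>
      (g (q ^ 6) x.1 * (q ^ (-1 : ℤ)) ^ x.1) * (g (q ^ 2) x.2 * (q ^ (-1 : ℤ)) ^ x.2) :=
    funext fun x => X_odd hq0 x
  have sa := summable_mul_of_summable_norm (s 6 (-4) (by norm_num)) (s 2 0 (by norm_num))
  have sb := summable_mul_of_summable_norm (s 6 (-1) (by norm_num)) (s 2 (-1) (by norm_num))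
  rw [← a] at sa ⊢
  rw [← b] at sb ⊢
  exact Summable.tsum_sum sa sb

/-! Product lemmas -/

lemma sq_lt_s12 {p : ℂ} (hp : ‖p‖ < 1) : ‖p ^ 2‖ < 1 := pow_lt hp (by norm_num)

lemma pm {p : ℂ} (hp : ‖p‖ < 1) (a : ℂ) :
    qPochInf a p * qPochInf (-a) p = qPochInf (a ^ 2) (p ^ 2) := by
  refine tendsto_nhds_unique ((qPoch_tendsto hp a).mul (qPoch_tendsto hp (-a))) ?_
  refine (qPoch_tendsto (sq_lt_s12 hp) (a ^ 2)).congr fun n => ?_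
  unfold qPoch
  rw [← Finset.prod_mul_distrib]
  refine Finset.prod_congr rfl fun k _ => ?_
  ring

lemma split2 {p : ℂ} (hp : ‖p‖ < 1) (a : ℂ) :
    qPochInf a p = qPochInf a (p ^ 2) * qPochInf (a * p) (p ^ 2) := by
  refine tendsto_nhds_unique
    ((qPoch_tendsto hp a).comp (tendsto_id.const_mul_atTop' (r := 2) (by norm_num))) ?_
  refine ((qPoch_tendsto (sq_lt_s12 hp) a).mul (qPoch_tendsto (sq_lt_s12 hp) (a * p))).congr fun n => ?_
  simp only [Function.comp, id]
  induction n with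
  | zero => simp [qPoch]
  | succ n ih =>
    unfold qPoch at ih ⊢
    rw [show 2 * (n + 1) = 2 * n + 1 + 1 by ring]
    simp only [Finset.prod_range_succ]
    rw [← ih]
    ring

lemma split3 {p : ℂ} (hp : ‖p‖ < 1) (a : ℂ) :
    qPochInf a p = qPochInf a (p ^ 3) * qPochInf (a * p) (p ^ 3) * qPochInf (a * p ^ 2) (p ^ 3) := by
  have h3 : ‖p ^ 3‖ < 1 := pow_lt hp (by norm_num)
  refine tendsto_nhds_unique
    ((qPoch_tendsto hp a).comp (tendsto_id.const_mul_atTop' (r := 3) (by norm_num))) ?_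
  refine (((qPoch_tendsto h3 a).mul (qPoch_tendsto h3 (a * p))).mul
    (qPoch_tendsto h3 (a * p ^ 2))).congr fun n => ?_
  simp only [Function.comp, id]
  induction n with
  | zero => simp [qPoch]
  | succ n ih =>
    unfold qPoch at ih ⊢
    rw [show 3 * (n + 1) = 3 * n + 1 + 1 + 1 by ring]
    simp only [Finset.prod_range_succ]
    rw [← ih]
    ring

lemma first {p : ℂ} (hp : ‖p‖ < 1) (a : ℂ) :
    qPochInf a p = (1 - a) * qPochInf (a * p) p := by
  refine tendsto_nhds_unique ((qPoch_tendsto hp a).comp (tendsto_add_atTop_nat 1)) ?_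
  refine ((qPoch_tendsto hp (a * p)).const_mul (1 - a)).congr fun n => ?_
  simp only [Function.comp]
  unfold qPoch
  rw [Finset.prod_range_succ', mul_comm]
  simp only [pow_zero, mul_one]
  congr 1
  refine Finset.prod_congr rfl fun k _ => ?_
  ring

lemma alg {P1 m1 P2 m2 P4 P6 m6 P12 w A2 A4 B1 B5 c1 c5 D2 D10 N : ℂ}
    (e1 : P1 * m1 = P2) (e2 : P2 * m2 = P4) (e3 : m1 = w * m2) (e4 : N = (1 - -1) * m2)
    (e5 : P6 * m6 = P12) (e6 : m2 = A2 * A4 * m6) (e7 : c1 * B1 = D2) (e8 : c5 * B5 = D10)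
    (z1 : P1 ≠ 0) (z6 : P6 ≠ 0) (zc1 : c1 ≠ 0) (zc5 : c5 ≠ 0) (y1 : m1 ≠ 0) (y2 : m2 ≠ 0)
    (y6 : m6 ≠ 0) :
    2 / 3 * ((A2 * A4 * P6) * (m2 * N * P2) + (B5 * B1 * P6) * (w * w * P2)) * (P1⁻¹) ^ 2
      = 2 / 3 * (P6 ^ 2 / (P1 ^ 2 * P12)) *
        (P2 ^ 5 * (D2 * D10 * P12) / (P1 ^ 2 * P4 ^ 2 * (c1 * c5 * P6))
          + 2 * P4 ^ 3 / P2 ^ 2) := by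
  subst e7 e8 e4 e5 e2 e1 e3
  have hw : w ≠ 0 := left_ne_zero_of_mul y1
  have hA : A2 * A4 = m2 / m6 := by rw [e6]; field_simp
  rw [hA]
  field_simp
  ring

end NS

theorem stmt_12 (q : ℂ) (h0 : 0 < ‖q‖) (h1 : ‖q‖ < 1) :
    (∑' p : ℕ × ℕ × ℕ × ℕ,
      (fun (i j k l : ℕ) =>
        q ^ (((i:ℤ)^2 + (j:ℤ)^2 + (k:ℤ)^2 + (l:ℤ)^2 - (i:ℤ)*(j:ℤ) - (i:ℤ)*(k:ℤ) - (i:ℤ)*(l:ℤ) + (j:ℤ)*(k:ℤ) + (j:ℤ)*(l:ℤ) + (i:ℤ) - (k:ℤ)) : ℤ) /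
          (qPoch (q ^ 1) (q ^ 1) i * qPoch (q ^ 1) (q ^ 1) j * qPoch (q ^ 1) (q ^ 1) k * qPoch (q ^ 1) (q ^ 1) l))
        p.1 p.2.1 p.2.2.1 p.2.2.2)
    = (2/3) * ((J q 6)^2 / ((J q 1)^2 * J q 12)) *
      ((J q 2)^5 * Jam q 2 12 / ((J q 1)^2 * (J q 4)^2 * Jam q 1 6)
        + 2 * (J q 4)^3 / (J q 2)^2) := by
  have hq0 : q ≠ 0 := norm_pos_iff.mp h0
  have lhs := (NS.tsum_nat (q := q)).trans (NS.tsum_f4 hq0 h1)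
  rw [NS.tsum_X hq0 h1] at lhs
  have n2 : ‖q ^ 2‖ < 1 := NS.pow_lt h1 (by norm_num)
  have n6 : ‖q ^ 6‖ < 1 := NS.pow_lt h1 (by norm_num)
  have n12 : ‖q ^ 12‖ < 1 := NS.pow_lt h1 (by norm_num)
  rw [NS.jtp_s12 (pow_ne_zero 6 hq0) n6 (zpow_ne_zero _ hq0),
    NS.jtp_s12 (pow_ne_zero 6 hq0) n6 (zpow_ne_zero _ hq0),
    NS.jtp_s12 (pow_ne_zero 2 hq0) n2 (zpow_ne_zero _ hq0),
    NS.jtp_s12 (pow_ne_zero 2 hq0) n2 (zpow_ne_zero _ hq0)] at lhs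
  have a1 : q ^ (-4 : ℤ) * q ^ 6 = q ^ 2 := by
    rw [← zpow_natCast, ← zpow_natCast, ← zpow_add₀ hq0]; norm_num
  have a2 : q ^ (-1 : ℤ) * q ^ 6 = q ^ 5 := by
    rw [← zpow_natCast, ← zpow_natCast, ← zpow_add₀ hq0]; norm_num
  have a3 : q ^ (0 : ℤ) * q ^ 2 = q ^ 2 := by simp
  have a4 : q ^ (-1 : ℤ) * q ^ 2 = q := by
    rw [← zpow_natCast, ← zpow_add₀ hq0]; norm_num
  have b1 : (q ^ (-4 : ℤ))⁻¹ = q ^ 4 := by rw [← zpow_neg]; norm_cast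
  have b2 : (q ^ (-1 : ℤ))⁻¹ = q := by simp
  have b3 : (q ^ (0 : ℤ))⁻¹ = 1 := by simp
  rw [a1, a2, a3, a4, b1, b2, b3] at lhs
  have e1 := NS.pm h1 q
  have e2 := NS.pm n2 (q ^ 2)
  have e3 := NS.split2 h1 (-q)
  have e4 := NS.first n2 (-1)
  have e5 := NS.pm n6 (q ^ 6)
  have e6 := NS.split3 n2 (-(q ^ 2))
  have e7 := NS.pm n6 q
  have e8 := NS.pm n6 (q ^ 5)
  have c0 : -1 * q ^ 2 = -(q ^ 2) := by ring
  have c1 : -q * q = -(q ^ 2) := by ring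
  have c2 : -(q ^ 2) * q ^ 2 = -(q ^ 4) := by ring
  have c3 : -(q ^ 2) * (q ^ 2) ^ 2 = -(q ^ 6) := by ring
  have c4 : (q ^ 2) ^ 2 = q ^ 4 := by ring
  have c5 : (q ^ 2) ^ 3 = q ^ 6 := by ring
  have c6 : (q ^ 6) ^ 2 = q ^ 12 := by ring
  have c7 : (q ^ 5) ^ 2 = q ^ 10 := by ring
  rw [c4] at e2
  rw [c1] at e3
  rw [c0] at e4
  rw [c6] at e5 e7 e8
  rw [c2, c3, c5] at e6
  rw [c7] at e8
  have nz : ∀ a b : ℕ, a ≠ 0 → b ≠ 0 → qPochInf (q ^ a) (q ^ b) ≠ 0 := fun a b ha hb =>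
    NS.qInf_ne (NS.pow_lt h1 hb) (NS.pow_lt h1 ha)
  have nn : ∀ a b : ℕ, a ≠ 0 → b ≠ 0 → qPochInf (-(q ^ a)) (q ^ b) ≠ 0 := fun a b ha hb =>
    NS.qInf_ne (NS.pow_lt h1 hb) (by rw [norm_neg]; exact NS.pow_lt h1 ha)
  have z1 := nz 1 1 (by norm_num) (by norm_num)
  have z2 := nz 2 2 (by norm_num) (by norm_num)
  have z4 := nz 4 4 (by norm_num) (by norm_num)
  have z6 := nz 6 6 (by norm_num) (by norm_num)
  have z12 := nz 12 12 (by norm_num) (by norm_num)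
  have z16 := nz 1 6 (by norm_num) (by norm_num)
  have z56 := nz 5 6 (by norm_num) (by norm_num)
  have y1 := nn 1 1 (by norm_num) (by norm_num)
  have y2 := nn 2 2 (by norm_num) (by norm_num)
  have y6 := nn 6 6 (by norm_num) (by norm_num)
  rw [pow_one] at z1 z16
  refine Eq.trans (tsum_congr fun x => (NS.f4_nat hq0 x.1 x.2.1 x.2.2.1 x.2.2.2).symm) ?_
  rw [lhs]
  simp only [J, Jam, pow_one, show 12 - 2 = 10 from rfl, show 6 - 1 = 5 from rfl]
  simp only [pow_one] at y1
  exact NS.alg e1 e2 e3 e4 e5 e6 e7 e8 z1 z6 z16 z56 y1 y2 y6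
end
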